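/- arXiv:1504.04250 — 3 statements merged into one kernel-verified Lean document; each statement's English description precedes it below -/
import Mathlib

section
/- Let X and Y be real Banach spaces, let Z ⊆ X, and let f : Z → Y be a surjective coarse quotient map with constant K ≥ 0 that is Lipschitz for large distances. Let k be the smallest positive integer with 2^k > ω_f(1) + 4K + 1. Then there exists a constant A ∈ (0,∞), depending only on f and K, such that qc_X(T^ω_{2^n}) ≤ A·qc_Y(T^ω_{2^{n+k}}) for every n ∈ ℕ. -/
open Set Function Filter

open scoped ENNReal

attribute [local instance] Classical.propDecidable

noncomputable section

def LipQuotientWith {α β : Type*} (dα : α → α → ℝ) (dβ : β → β → ℝ) (f : α → β)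
    (L C : ℝ) : Prop :=
  Function.Surjective f ∧
  (∀ (x a : α) (r : ℝ), 0 < r → dα x a ≤ r → dβ (f x) (f a) ≤ L * r) ∧
  (∀ (x : α) (y : β) (r : ℝ), 0 < r → dβ (f x) y ≤ r / C → ∃ a : α, dα x a ≤ r ∧ f a = y)

def qcSet (X : Type*) [PseudoMetricSpace X] (β : Type*) (dβ : β → β → ℝ) : Set ℝ :=
  {q | ∃ (Z : Set X) (f : Z → β) (L C : ℝ), 0 < L ∧ 0 < C ∧
    LipQuotientWith (fun a b : Z => dist a.1 b.1) dβ f L C ∧ q = L * C}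

def qcDist (X : Type*) [PseudoMetricSpace X] (β : Type*) (dβ : β → β → ℝ) : ℝ≥0∞ :=
  ⨅ q ∈ qcSet X β dβ, ENNReal.ofReal q
def LipLargeDist {α β : Type*} (dα : α → α → ℝ) (dβ : β → β → ℝ) (f : α → β) : Prop :=
  ∀ s : ℝ, 0 < s → ∃ M : ℝ, ∀ a b : α, s ≤ dα a b → dβ (f a) (f b) ≤ M * dα a b
def CoarseQuotientMap {α β : Type*} (dα : α → α → ℝ) (dβ : β → β → ℝ) (f : α → β)
    (K : ℝ) : Prop :=
  Function.Surjective f ∧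
  (∀ t : ℝ, 0 < t → ∃ B : ℝ, ∀ a b : α, dα a b ≤ t → dβ (f a) (f b) ≤ B) ∧
  (∀ ε : ℝ, 0 < ε → ∃ δ : ℝ, 0 < δ ∧ ∀ (x : α) (y : β), dβ (f x) y ≤ ε →
    ∃ a : α, dα x a ≤ δ ∧ dβ (f a) y ≤ K)

def expMod1 {α β : Type*} (dα : α → α → ℝ) (dβ : β → β → ℝ) (f : α → β) : ℝ :=
  sSup {d : ℝ | ∃ a b : α, dα a b ≤ 1 ∧ d = dβ (f a) (f b)}
def lcpLen : List ℕ → List ℕ → ℕ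
  | a :: x, b :: y => if a = b then lcpLen x y + 1 else 0
  | _, _ => 0

def treeDist (x y : List ℕ) : ℝ :=
  (x.length : ℝ) + (y.length : ℝ) - 2 * (lcpLen x y : ℝ)

def TreeOmega (h : ℕ) : Type := {x : List ℕ // x.length ≤ h}

def tDist (h : ℕ) : TreeOmega h → TreeOmega h → ℝ := fun x y => treeDist x.1 y.1

/-!
Pull a Lipschitz quotient `g` from a subset `W` of `Y` onto a tree back along `f`: label a point
`x` of `Z` by `g w` whenever `f x` lies within `K` of `w ∈ W`. Since `Y` is a normed space, `W`
may first be dilated without changing the codistortion of `g`, so that `g` contracts distances by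
as large a factor `R` as we like. Then labels of points at distance at most `1` are less than `1`
apart, hence equal, as distances between distinct vertices of a tree are at least `1`; and beyond
distance `1` the map `f` is controlled by its Lipschitz constant for large distances. This makes
labels well defined and `1`-Lipschitz, while segments of `Y` lift through `f` step by step, which
gives the co-Lipschitz bound. Only the separation of the vertices enters, so the height of the
tree does not change; passing to a taller tree costs nothing because `T^ω_h` sits isometrically in
`T^ω_{h'}`.
-/

/-- A distance function on `β` for which distinct points are at distance at least `1`, as for the
vertices of a graph; neither symmetry nor the triangle inequality is required. -/
structure OneSeparated {β : Type*} (dβ : β → β → ℝ) : Prop where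
  self_eq_zero : ∀ t, dβ t t = 0
  eq_of_lt_one : ∀ t u, dβ t u < 1 → t = u

theorem OneSeparated.one_le {β : Type*} {dβ : β → β → ℝ} (hβ : OneSeparated dβ) {t u : β}
    (h : t ≠ u) : 1 ≤ dβ t u :=
  not_lt.mp (mt (hβ.eq_of_lt_one t u) h)

theorem lcpLen_self (x : List ℕ) : lcpLen x x = x.length := by
  induction x with
  | nil => rfl
  | cons a x ih => simp only [lcpLen, if_true, ih, List.length_cons]

theorem two_mul_lcpLen_lt_of_ne {x y : List ℕ} (h : x ≠ y) :
    2 * lcpLen x y < x.length + y.length := by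
  induction x generalizing y with
  | nil =>
    simpa only [lcpLen, mul_zero, List.length_nil, zero_add, List.length_pos_iff] using h.symm
  | cons a x ih =>
    cases y with
    | nil => simp only [lcpLen, List.length_cons]; omega
    | cons b y =>
      rcases eq_or_ne a b with rfl | hab
      · have hlt := ih (ne_of_apply_ne (a :: ·) h)
        simp only [lcpLen, if_true, List.length_cons]
        omega
      · simp only [lcpLen, if_neg hab, List.length_cons]
        omega

theorem oneSeparated_treeDist : OneSeparated treeDist where
  self_eq_zero x := by rw [treeDist, lcpLen_self]; ring
  eq_of_lt_one x y h := by
    by_contra hxy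
    have hlcp : (2 * lcpLen x y + 1 : ℝ) ≤ x.length + y.length :=
      mod_cast two_mul_lcpLen_lt_of_ne hxy
    rw [treeDist] at h
    linarith

theorem oneSeparated_tDist (h : ℕ) : OneSeparated (tDist h) where
  self_eq_zero t := oneSeparated_treeDist.self_eq_zero t.1
  eq_of_lt_one t u htu := Subtype.ext (oneSeparated_treeDist.eq_of_lt_one t.1 u.1 htu)

namespace LipQuotientWith

variable {α β : Type*} {dα : α → α → ℝ} {dβ : β → β → ℝ} {f : α → β} {L C : ℝ}

theorem dist_le_mul (hf : LipQuotientWith dα dβ f L C) {x a : α} (hxa : 0 ≤ dα x a) :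
    dβ (f x) (f a) ≤ L * dα x a := by
  -- Only radii `r > 0` are allowed in the definition, so `dα x a = 0` is reached as a limit.
  have hlim : Tendsto (fun r => L * r) (nhdsWithin (dα x a) (Ioi (dα x a)))
      (nhds (L * dα x a)) :=
    ((continuous_const_mul L).tendsto _).mono_left nhdsWithin_le_nhds
  refine ge_of_tendsto hlim ?_
  filter_upwards [self_mem_nhdsWithin] with r hr
  exact hf.2.1 x a r (hxa.trans_lt hr) (le_of_lt hr)

theorem exists_dist_le_mul (hf : LipQuotientWith dα dβ f L C) (hC : 0 < C) {x : α} {y : β}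
    (hxy : 0 < dβ (f x) y) : ∃ a, dα x a ≤ C * dβ (f x) y ∧ f a = y :=
  hf.2.2 x y _ (mul_pos hC hxy) (mul_div_cancel_left₀ _ hC.ne').ge

theorem one_le_mul (hf : LipQuotientWith dα dβ f L C) (hL : 0 ≤ L) (hC : 0 < C)
    (hα : ∀ x a, 0 ≤ dα x a) {x : α} {y : β} (hxy : 0 < dβ (f x) y) : 1 ≤ L * C := by
  obtain ⟨a, hxa, rfl⟩ := hf.exists_dist_le_mul hC hxy
  refine le_of_mul_le_mul_right ?_ hxy
  calc 1 * dβ (f x) (f a) ≤ L * dα x a := (one_mul _).trans_le (hf.dist_le_mul (hα x a))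
    _ ≤ L * (C * dβ (f x) (f a)) := mul_le_mul_of_nonneg_left hxa hL
    _ = L * C * dβ (f x) (f a) := (mul_assoc _ _ _).symm

theorem comp_smul {Y : Type*} [SeminormedAddCommGroup Y] [NormedSpace ℝ Y] {W : Set Y}
    {g : W → β} (hg : LipQuotientWith (fun a b : W => dist a.1 b.1) dβ g L C) {c : ℝ}
    (hc : 0 < c) :
    LipQuotientWith (fun a b : (c • · : Y → Y) ⁻¹' W => dist a.1 b.1) dβ
      (fun y => g ⟨c • y.1, y.2⟩) (L * c) (C / c) := by
  have hdist (y z : Y) : dist (c • y) (c • z) = c * dist y z := by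
    rw [dist_smul₀, Real.norm_of_nonneg hc.le]
  have hsmul (w : W) : c • c⁻¹ • w.1 = w.1 := smul_inv_smul₀ hc.ne' w.1
  have hmem (w : W) : c⁻¹ • w.1 ∈ (c • · : Y → Y) ⁻¹' W := by
    rw [mem_preimage, hsmul]
    exact w.2
  have hlift (w : W) : g ⟨c • c⁻¹ • w.1, hmem w⟩ = g w := congrArg g (Subtype.ext (hsmul w))
  refine ⟨fun t => ?_, fun x a r hr hxa => ?_, fun x t r hr hxt => ?_⟩
  · obtain ⟨w, rfl⟩ := hg.1 t
    exact ⟨⟨c⁻¹ • w.1, hmem w⟩, hlift w⟩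
  · rw [mul_assoc]
    refine hg.2.1 _ _ (c * r) (mul_pos hc hr) ?_
    simpa only [hdist] using mul_le_mul_of_nonneg_left hxa hc.le
  · obtain ⟨w, hxw, rfl⟩ := hg.2.2 _ t (c * r) (mul_pos hc hr) (hxt.trans_eq (by field_simp))
    refine ⟨⟨c⁻¹ • w.1, hmem w⟩, le_of_mul_le_mul_left ?_ hc, hlift w⟩
    simpa only [← hdist, hsmul] using hxw

end LipQuotientWith

section QuotientCodistortion

variable {X Y β γ : Type*} [PseudoMetricSpace X] {dβ : β → β → ℝ} {dγ : γ → γ → ℝ}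

theorem qcSet_pos {q : ℝ} (hq : q ∈ qcSet X β dβ) : 0 < q := by
  obtain ⟨_, _, L, C, hL, hC, _, rfl⟩ := hq
  exact mul_pos hL hC

theorem one_le_of_mem_qcSet {q : ℝ} (hq : q ∈ qcSet X β dβ) {t u : β} (htu : 0 < dβ t u) :
    1 ≤ q := by
  obtain ⟨_, _, _, _, hL, hC, hg, rfl⟩ := hq
  obtain ⟨x, rfl⟩ := hg.1 t
  exact hg.one_le_mul hL.le hC (fun _ _ => dist_nonneg) htu

theorem exists_lipQuotientWith_of_mem_qcSet [SeminormedAddCommGroup Y] [NormedSpace ℝ Y] {q : ℝ}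
    (hq : q ∈ qcSet Y β dβ) {L : ℝ} (hL : 0 < L) :
    ∃ (W : Set Y) (g : W → β), LipQuotientWith (fun a b : W => dist a.1 b.1) dβ g L (q / L) := by
  obtain ⟨W, g, L₀, C, hL₀, -, hg, rfl⟩ := hq
  have hscale := hg.comp_smul (div_pos hL hL₀)
  rw [mul_div_cancel₀ _ hL₀.ne', div_div_eq_mul_div, mul_comm C] at hscale
  exact ⟨_, _, hscale⟩

theorem qcSet_subset_of_isometric {ι : γ → β} (hι : Injective ι)
    (hdist : ∀ s t, dβ (ι s) (ι t) = dγ s t) : qcSet X β dβ ⊆ qcSet X γ dγ := by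
  rintro _ ⟨Z, g, L, C, hL, hC, ⟨hsurj, hLip, hcoLip⟩, rfl⟩
  let S : Set X := {x | ∃ (hx : x ∈ Z) (t : γ), g ⟨x, hx⟩ = ι t}
  choose hSZ label hlabel using fun s : S => s.2
  have label_eq (z : Z) (t : γ) (hzt : g z = ι t) : label ⟨z.1, z.2, t, hzt⟩ = t :=
    hι ((hlabel _).symm.trans hzt)
  refine ⟨S, label, L, C, hL, hC, ⟨fun t => ?_, fun x a r hr hxa => ?_, fun x t r hr hxt => ?_⟩,
    rfl⟩
  · obtain ⟨z, hz⟩ := hsurj (ι t)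
    exact ⟨_, label_eq z t hz⟩
  · rw [← hdist, ← hlabel, ← hlabel]
    exact hLip _ _ r hr hxa
  · rw [← hdist, ← hlabel] at hxt
    obtain ⟨z, hxz, hz⟩ := hcoLip _ _ r hr hxt
    exact ⟨_, hxz, label_eq z t hz⟩

theorem qcDist_le_of_isometric {ι : γ → β} (hι : Injective ι)
    (hdist : ∀ s t, dβ (ι s) (ι t) = dγ s t) : qcDist X γ dγ ≤ qcDist X β dβ :=
  biInf_mono (qcSet_subset_of_isometric hι hdist)

theorem qcDist_tDist_mono : Monotone fun h => qcDist X (TreeOmega h) (tDist h) := fun _ _ hle =>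
  qcDist_le_of_isometric (ι := fun x => ⟨x.1, x.2.trans hle⟩)
    (fun _ _ hxy => Subtype.ext (Subtype.mk.inj hxy)) fun _ _ => rfl

theorem qcDist_le_mul_qcDist [PseudoMetricSpace Y] {A : ℝ} (hA : 0 < A)
    (hmem : ∀ q ∈ qcSet Y β dβ, A * q ∈ qcSet X γ dγ) :
    qcDist X γ dγ ≤ ENNReal.ofReal A * qcDist Y β dβ := by
  have hA0 : ENNReal.ofReal A ≠ 0 := (ENNReal.ofReal_pos.mpr hA).ne'
  simp only [qcDist, ENNReal.mul_iInf_of_ne hA0 ENNReal.ofReal_ne_top]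
  refine le_iInf₂ fun q hq => ?_
  rw [← ENNReal.ofReal_mul hA.le]
  exact iInf₂_le _ (hmem q hq)

theorem mem_qcSet_of_relation (hβ : OneSeparated dβ) {C : ℝ} (hC : 0 < C) {r : X → β → Prop}
    (hlt : ∀ x t y u, r x t → r y u → dβ t u < max 1 (dist x y))
    (hsurj : ∀ t, ∃ x, r x t)
    (hlift : ∀ x t u, r x t → t ≠ u → ∃ y, dist x y ≤ C * dβ t u ∧ r y u) :
    C ∈ qcSet X β dβ := by
  let S : Set X := {x | ∃ t, r x t}
  choose label hlabel using fun s : S => s.2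
  have label_eq (s : S) (t : β) (hst : r s.1 t) : label s = t := by
    refine hβ.eq_of_lt_one _ _ ?_
    simpa only [dist_self, zero_le_one, max_eq_left] using hlt _ _ _ _ (hlabel s) hst
  have label_dist_le (s s' : S) : dβ (label s) (label s') ≤ dist s.1 s'.1 := by
    have hss' := hlt _ _ _ _ (hlabel s) (hlabel s')
    rcases lt_max_iff.mp hss' with hnear | hfar
    · rw [hβ.eq_of_lt_one _ _ hnear, hβ.self_eq_zero]
      exact dist_nonneg
    · exact hfar.le
  refine ⟨S, label, 1, C, one_pos, hC, ⟨fun t => ?_, fun s s' ρ _ hss' => ?_,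
    fun s t ρ hρ hst => ?_⟩, (one_mul C).symm⟩
  · obtain ⟨x, hx⟩ := hsurj t
    exact ⟨⟨x, t, hx⟩, label_eq _ t hx⟩
  · rw [one_mul]
    exact (label_dist_le s s').trans hss'
  · obtain rfl | hne := eq_or_ne (label s) t
    · exact ⟨s, (dist_self s.1).trans_le hρ.le, rfl⟩
    · obtain ⟨y, hy, hyt⟩ := hlift _ _ t (hlabel s) hne
      exact ⟨⟨y, t, hyt⟩, hy.trans ((le_div_iff₀' hC).mp hst), label_eq _ t hyt⟩

end QuotientCodistortion

theorem exists_lift_of_dist_le_natCast {α Y : Type*} [PseudoMetricSpace α]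
    [SeminormedAddCommGroup Y] [NormedSpace ℝ Y] {f : α → Y} {K δ : ℝ}
    (hstep : ∀ z y, dist (f z) y ≤ K + 1 → ∃ a, dist z a ≤ δ ∧ dist (f a) y ≤ K) (m : ℕ) {z : α}
    {p y : Y} (hzp : dist (f z) p ≤ K) (hpy : dist p y ≤ m) :
    ∃ a, dist z a ≤ δ * m ∧ dist (f a) y ≤ K := by
  induction m generalizing z p with
  | zero =>
    refine ⟨z, by simp only [dist_self, Nat.cast_zero, mul_zero, le_refl], ?_⟩
    have hpy0 : dist p y ≤ 0 := by simpa only [Nat.cast_zero] using hpy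
    linarith [dist_triangle (f z) p y]
  | succ m ih =>
    push_cast at hpy ⊢
    obtain ⟨p', hpp', hp'y⟩ := exists_dist_le_le zero_le_one m.cast_nonneg hpy
    obtain ⟨b, hzb, hbp'⟩ := hstep z p' (by linarith [dist_triangle (f z) p p'])
    obtain ⟨a, hba, hay⟩ := ih hbp' hp'y
    exact ⟨a, by linarith [dist_triangle z b a], hay⟩

namespace CoarseQuotientMap

theorem constant_nonneg {α β : Type*} [PseudoMetricSpace α] [PseudoMetricSpace β] [Nonempty β]
    {f : α → β} {K : ℝ} (hf : CoarseQuotientMap dist dist f K) : 0 ≤ K := by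
  obtain ⟨δ, -, hδ⟩ := hf.2.2 1 one_pos
  obtain ⟨z⟩ := hf.1.nonempty
  obtain ⟨a, -, ha⟩ := hδ z (f z) ((dist_self _).trans_le zero_le_one)
  exact dist_nonneg.trans ha

theorem exists_dist_le_mul_max {α β : Type*} [PseudoMetricSpace α] [PseudoMetricSpace β]
    {f : α → β} {K : ℝ} (hf : CoarseQuotientMap dist dist f K)
    (hlip : LipLargeDist dist dist f) :
    ∃ Λ : ℝ, 0 ≤ Λ ∧ ∀ a b, dist (f a) (f b) ≤ Λ * max 1 (dist a b) := by
  obtain ⟨B, hB⟩ := hf.2.1 1 one_pos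
  obtain ⟨M, hM⟩ := hlip 1 one_pos
  refine ⟨max |B| |M|, by positivity, fun a b => ?_⟩
  rcases le_total (dist a b) 1 with hab | hab
  · rw [max_eq_left hab, mul_one]
    exact (hB a b hab).trans ((le_abs_self B).trans (le_max_left _ _))
  · rw [max_eq_right hab]
    refine (hM a b hab).trans ?_
    gcongr
    exact (le_abs_self M).trans (le_max_right _ _)

theorem exists_lift {α Y : Type*} [PseudoMetricSpace α] [SeminormedAddCommGroup Y]
    [NormedSpace ℝ Y] {f : α → Y} {K : ℝ} (hf : CoarseQuotientMap dist dist f K) :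
    ∃ δ : ℝ, 0 < δ ∧ ∀ z y, ∃ a, dist z a ≤ δ * (dist (f z) y + 1) ∧ dist (f a) y ≤ K := by
  have hK := hf.constant_nonneg
  obtain ⟨δ, hδ, hstep⟩ := hf.2.2 (K + 1) (by linarith)
  refine ⟨δ, hδ, fun z y => ?_⟩
  obtain ⟨a, hza, hay⟩ := exists_lift_of_dist_le_natCast hstep ⌈dist (f z) y⌉₊
    ((dist_self (f z)).trans_le hK) (Nat.le_ceil _)
  refine ⟨a, hza.trans ?_, hay⟩
  gcongr
  exact (Nat.ceil_lt_add_one dist_nonneg).le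

end CoarseQuotientMap

section Label

variable {X Y β : Type*} [PseudoMetricSpace X] [PseudoMetricSpace Y] {dβ : β → β → ℝ} {Z : Set X}
  {f : Z → Y} {K Λ δ : ℝ}

/-- The point `x` of `Z` carries the label `t` if `f x` is `K`-close to a point of `W` that `g`
sends to `t`. This is how a map `g` on `W ⊆ Y` is pulled back to a subset of `X`. It is a relation
because a label need not exist, and is unique only when `g` contracts enough (see
`IsLabel.dist_lt_max`). -/
def IsLabel (f : Z → Y) (K : ℝ) {W : Set Y} (g : W → β) (x : X) (t : β) : Prop :=
  ∃ (hx : x ∈ Z) (w : W), dist (f ⟨x, hx⟩) w.1 ≤ K ∧ g w = t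

theorem IsLabel.dist_lt_max {W : Set Y} {g : W → β} {R C : ℝ} (hR : 0 < R) (hΛR : Λ + 2 * K < R)
    (hg : LipQuotientWith (fun a b : W => dist a.1 b.1) dβ g R⁻¹ C)
    (hf : ∀ a b, dist (f a) (f b) ≤ Λ * max 1 (dist a b)) {x y : X} {t u : β}
    (hx : IsLabel f K g x t) (hy : IsLabel f K g y u) : dβ t u < max 1 (dist x y) := by
  obtain ⟨hxZ, w, hxw, rfl⟩ := hx
  obtain ⟨hyZ, v, hyv, rfl⟩ := hy
  have hK : 0 ≤ K := dist_nonneg.trans hxw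
  set D : ℝ := max 1 (dist x y)
  have hD : 1 ≤ D := le_max_left _ _
  have hfxy : dist (f ⟨x, hxZ⟩) (f ⟨y, hyZ⟩) ≤ Λ * D := hf _ _
  have hwv : dist w.1 v.1 < R * D := by
    calc dist w.1 v.1 ≤ K + Λ * D + K :=
          (dist_triangle4 _ (f ⟨x, hxZ⟩) (f ⟨y, hyZ⟩) _).trans
            (add_le_add_three ((dist_comm _ _).trans_le hxw) hfxy hyv)
      _ ≤ (Λ + 2 * K) * D := by linarith [le_mul_of_one_le_right hK hD]
      _ < R * D := mul_lt_mul_of_pos_right hΛR (one_pos.trans_le hD)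
  exact (hg.dist_le_mul dist_nonneg).trans_lt ((inv_mul_lt_iff₀ hR).mpr hwv)

theorem IsLabel.exists_lift {W : Set Y} {g : W → β} {L C : ℝ} (hC : 0 < C) (hδ : 0 ≤ δ)
    (hg : LipQuotientWith (fun a b : W => dist a.1 b.1) dβ g L C)
    (hlift : ∀ z y, ∃ a, dist z a ≤ δ * (dist (f z) y + 1) ∧ dist (f a) y ≤ K) {x : X}
    {t u : β} (hx : IsLabel f K g x t) (htu : 0 < dβ t u) :
    ∃ y, dist x y ≤ δ * (K + C * dβ t u + 1) ∧ IsLabel f K g y u := by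
  obtain ⟨hxZ, w, hxw, rfl⟩ := hx
  obtain ⟨v, hwv, rfl⟩ := hg.exists_dist_le_mul hC htu
  obtain ⟨a, hxa, hav⟩ := hlift ⟨x, hxZ⟩ v.1
  refine ⟨a.1, hxa.trans ?_, a.2, v, hav, rfl⟩
  gcongr
  exact (dist_triangle _ w.1 _).trans (add_le_add hxw hwv)

end Label

theorem mul_mem_qcSet_of_exists_lift {X Y β : Type*} [PseudoMetricSpace X]
    [SeminormedAddCommGroup Y] [NormedSpace ℝ Y] {dβ : β → β → ℝ} {Z : Set X} [Nonempty Z]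
    {f : Z → Y} {K Λ δ : ℝ} (hβ : OneSeparated dβ) (hK : 0 ≤ K)
    (hΛ : 0 ≤ Λ) (hδ : 0 < δ) (hf : ∀ a b, dist (f a) (f b) ≤ Λ * max 1 (dist a b))
    (hlift : ∀ z y, ∃ a, dist z a ≤ δ * (dist (f z) y + 1) ∧ dist (f a) y ≤ K) {q : ℝ}
    (hq : q ∈ qcSet Y β dβ) : δ * (3 * K + Λ + 2) * q ∈ qcSet X β dβ := by
  have hq0 : 0 < q := qcSet_pos hq
  set R : ℝ := Λ + 2 * K + 1 with hR
  have hR0 : 0 < R := by positivity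
  obtain ⟨W, g, hg⟩ := exists_lipQuotientWith_of_mem_qcSet hq (inv_pos.mpr hR0)
  rw [div_inv_eq_mul] at hg
  refine mem_qcSet_of_relation hβ (r := IsLabel f K g) (by positivity)
    (fun x t y u hx hy => hx.dist_lt_max hR0 (lt_add_one _) hg hf hy) (fun t => ?_)
    fun x t u hx hne => ?_
  · obtain ⟨w, rfl⟩ := hg.1 t
    obtain ⟨a, -, haw⟩ := hlift (Classical.arbitrary Z) w.1
    exact ⟨a.1, a.2, w, haw, rfl⟩
  · have hone : 1 ≤ dβ t u := hβ.one_le hne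
    have htu : 0 < dβ t u := one_pos.trans_le hone
    have hq1 : 1 ≤ q := one_le_of_mem_qcSet hq htu
    have hqtu : 1 ≤ q * dβ t u := one_le_mul_of_one_le_of_one_le hq1 hone
    obtain ⟨y, hxy, hy⟩ := hx.exists_lift (by positivity) hδ.le hg hlift htu
    refine ⟨y, ?_, hy⟩
    calc dist x y ≤ δ * ((K + 1) * 1 + R * (q * dβ t u)) := hxy.trans_eq (by ring)
      _ ≤ δ * ((K + 1) * (q * dβ t u) + R * (q * dβ t u)) := by gcongr
      _ = δ * (3 * K + Λ + 2) * q * dβ t u := by rw [hR]; ring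

theorem coarse_quotient_tree_transfer_general
    {X Y : Type*} [PseudoMetricSpace X] [SeminormedAddCommGroup Y] [NormedSpace ℝ Y]
    {Z : Set X} {f : Z → Y} {K : ℝ}
    (hf : CoarseQuotientMap (fun a b : Z => dist a.1 b.1) (fun a b : Y => dist a b) f K)
    (hlip : LipLargeDist (fun a b : Z => dist a.1 b.1) (fun a b : Y => dist a b) f) :
    ∃ A : ℝ, 0 < A ∧ ∀ h h' : ℕ, h ≤ h' →
      qcDist X (TreeOmega h) (tDist h) ≤
        ENNReal.ofReal A * qcDist Y (TreeOmega h') (tDist h') := by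
  change CoarseQuotientMap dist dist f K at hf
  have hK := hf.constant_nonneg
  have hZ : Nonempty Z := hf.1.nonempty
  obtain ⟨Λ, hΛ, hbound⟩ := hf.exists_dist_le_mul_max hlip
  obtain ⟨δ, hδ, hlift⟩ := hf.exists_lift
  refine ⟨δ * (3 * K + Λ + 2), by positivity, fun h h' hle => ?_⟩
  calc qcDist X (TreeOmega h) (tDist h)
      ≤ ENNReal.ofReal (δ * (3 * K + Λ + 2)) * qcDist Y (TreeOmega h) (tDist h) :=
        qcDist_le_mul_qcDist (by positivity) fun _ =>
          mul_mem_qcSet_of_exists_lift (oneSeparated_tDist h) hK hΛ hδ hbound hlift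
    _ ≤ _ := mul_le_mul_right (qcDist_tDist_mono hle) _

/-- Proposition 4.15: if a Banach space `Y` is a coarse quotient,
with constant `K`, of a subset `Z` of a Banach space `X` via a map `f` Lipschitz
for large distances, and `k` is the smallest positive integer with
`2^k > ω_f(1) + 4K + 1`, then there is `A > 0` with
`qc_X(T^ω_{2^n}) ≤ A qc_Y(T^ω_{2^{n+k}})` for every `n`. -/
theorem coarse_quotient_tree_transfer
    (X : Type*) [NormedAddCommGroup X] [NormedSpace ℝ X] [CompleteSpace X]
    (Y : Type*) [NormedAddCommGroup Y] [NormedSpace ℝ Y] [CompleteSpace Y]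
    (Z : Set X) (f : Z → Y) (K : ℝ) (hK : 0 ≤ K)
    (hf : CoarseQuotientMap (fun a b : Z => dist a.1 b.1) (fun a b : Y => dist a b) f K)
    (hlip : LipLargeDist (fun a b : Z => dist a.1 b.1) (fun a b : Y => dist a b) f)
    (k : ℕ) (hk : 0 < k)
    (hk2 : expMod1 (fun a b : Z => dist a.1 b.1) (fun a b : Y => dist a b) f + 4 * K + 1 <
      (2 : ℝ) ^ k)
    (hkmin : ∀ j : ℕ, 0 < j →
      expMod1 (fun a b : Z => dist a.1 b.1) (fun a b : Y => dist a b) f + 4 * K + 1 <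
        (2 : ℝ) ^ j → k ≤ j) :
    ∃ A : ℝ, 0 < A ∧ ∀ n : ℕ,
      qcDist X (TreeOmega (2 ^ n)) (tDist (2 ^ n)) ≤
        ENNReal.ofReal A * qcDist Y (TreeOmega (2 ^ (n + k))) (tDist (2 ^ (n + k))) := by
  obtain ⟨A, hA, hle⟩ := coarse_quotient_tree_transfer_general hf hlip
  exact ⟨A, hA, fun n => hle _ _ (Nat.pow_le_pow_right two_pos (n.le_add_right k))⟩

end
end

section
/- Let p ∈ (1,∞) and let X be a real Banach space admitting an equivalent norm with property (β_p) with some constant γ > 0. Suppose a Banach space Y is a coarse quotient (with some constant K ≥ 0) of a subset of X via a map that is Lipschitz for large distances. Then for every q ∈ (p,∞), ℓ_q is not a coarse quotient of a subset of Y via a map that is Lipschitz for large distances. -/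
open Set Function Filter

open scoped ENNReal

attribute [local instance] Classical.propDecidable

noncomputable section

def rolewiczSetN {Y : Type*} [AddCommGroup Y] (N : Y → ℝ) (t : ℝ) : Set ℝ :=
  {s | ∃ x : Y, N x ≤ 1 ∧ ∃ y : ℕ → Y, (∀ i, N (y i) ≤ 1) ∧
    (∀ n m : ℕ, n ≠ m → t ≤ N (y n - y m)) ∧ s = ⨅ i, N (x - y i) / 2}

def rolewiczModN {Y : Type*} [AddCommGroup Y] (N : Y → ℝ) (t : ℝ) : ℝ :=
  1 - sSup (rolewiczSetN N t)

def IsEquivNorm (Y : Type*) [SeminormedAddCommGroup Y] [NormedSpace ℝ Y] (N : Y → ℝ) : Prop :=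
  (∀ x y : Y, N (x + y) ≤ N x + N y) ∧ (∀ (c : ℝ) (x : Y), N (c • x) = |c| * N x) ∧
  ∃ a b : ℝ, 0 < a ∧ a ≤ b ∧ ∀ y : Y, a * ‖y‖ ≤ N y ∧ N y ≤ b * ‖y‖

def AdmitsBetaNorm (Y : Type*) [SeminormedAddCommGroup Y] [NormedSpace ℝ Y] : Prop :=
  ∃ N : Y → ℝ, IsEquivNorm Y N ∧ ∀ t : ℝ, 0 < t → t ≤ 2 → 0 < rolewiczModN N t

def AdmitsBetaPNorm (Y : Type*) [SeminormedAddCommGroup Y] [NormedSpace ℝ Y] (p γ : ℝ) : Prop :=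
  ∃ N : Y → ℝ, IsEquivNorm Y N ∧
    ∀ t : ℝ, 0 < t → t ≤ 2 → (rolewiczSetN N t).Nonempty → γ * t ^ p ≤ rolewiczModN N t
/-!
Compose the two quotient maps on the pairs `(z, w)` with `w` close to the image of `z`: this gives a
coarse Lipschitz, coarsely co-Lipschitz map `F` onto `ℓ_q` from a set whose distances are measured
in `X`. Then every displacement of size `ρ` in `ℓ_q` is realised by a move of size `O(ρ)` in `X`,
and the point is that property `(β_p)` keeps improving the constant. To realise a displacement `2v`,
realise `v` first, up to a small tail `r`, ending at `z`, and then realise from `z` each of the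
displacements `v - r + τ eᵢ`. The endpoints are separated by about `τ`, so `(β_p)` provides one of
them whose distance from the start is shorter than twice the original length by a factor
`1 - c τ ^ p`. The price is a new tail of norm at most `τ`, and a loss of `2 τ ^ q` in the
admissible `q`-th power of `‖v‖`. With `τ ^ q = 1 / k` one can afford `k` doublings, and since
`p < q` the factor `(1 - c k ^ (-p / q)) ^ k` tends to `0`. So `F` expands some moves by an
arbitrarily large ratio, which a coarse Lipschitz map cannot do.
-/

/-! ### Property `(β_p)` for a seminorm -/

section BetaP

variable {X : Type*} [AddCommGroup X] [Module ℝ X] {N : Seminorm ℝ X} {p γ t : ℝ}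

/-- Property `(β_p)` with constant `γ`, for a seminorm `N`. -/
def HasBetaP (N : Seminorm ℝ X) (p γ : ℝ) : Prop :=
  ∀ t : ℝ, 0 < t → t ≤ 2 → (rolewiczSetN N t).Nonempty → γ * t ^ p ≤ rolewiczModN N t

theorem bddAbove_rolewiczSetN (N : Seminorm ℝ X) (t : ℝ) : BddAbove (rolewiczSetN N t) := by
  refine ⟨1, ?_⟩
  rintro _ ⟨x, hx, y, hy, -, rfl⟩
  have hbelow : BddBelow (range fun i => N (x - y i) / 2) :=
    ⟨0, forall_mem_range.2 fun i => div_nonneg (apply_nonneg N _) zero_le_two⟩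
  have hsub := map_sub_le_add N x (y 0)
  exact (ciInf_le hbelow 0).trans (by linarith [hy 0])

theorem HasBetaP.exists_sub_le_of_le_one (hN : HasBetaP N p γ) (hγ : 0 < γ) (ht : 0 < t)
    {x : X} {y : ℕ → X} (hx : N x ≤ 1) (hy : ∀ i, N (y i) ≤ 1)
    (hsep : ∀ i j, i ≠ j → t ≤ N (y i - y j)) :
    ∃ i, N (x - y i) ≤ 2 * (1 - γ / 2 * t ^ p) := by
  have ht2 : t ≤ 2 := by
    linarith [hsep 0 1 zero_ne_one, map_sub_le_add N (y 0) (y 1), hy 0, hy 1]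
  have hmem : ⨅ i, N (x - y i) / 2 ∈ rolewiczSetN N t := ⟨x, hx, y, hy, hsep, rfl⟩
  have hmod : γ * t ^ p ≤ 1 - sSup (rolewiczSetN N t) := hN t ht ht2 ⟨_, hmem⟩
  have hle := le_csSup (bddAbove_rolewiczSetN N t) hmem
  have hpos : 0 < γ * t ^ p := mul_pos hγ (Real.rpow_pos_of_pos ht p)
  -- The infimum need not be attained, which costs half of the constant `γ`.
  obtain ⟨i, hi⟩ := exists_lt_of_ciInf_lt
    (show ⨅ i, N (x - y i) / 2 < 1 - γ / 2 * t ^ p by linarith)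
  exact ⟨i, by linarith⟩

theorem HasBetaP.exists_sub_le (hN : HasBetaP N p γ) (hγ : 0 < γ) (ht : 0 < t)
    {x z : X} {y : ℕ → X} {B : ℝ} (hB : 0 < B) (hx : N (x - z) ≤ B) (hy : ∀ i, N (y i - z) ≤ B)
    (hsep : ∀ i j, i ≠ j → t * B ≤ N (y i - y j)) :
    ∃ i, N (x - y i) ≤ 2 * B * (1 - γ / 2 * t ^ p) := by
  have hscale (u : X) : N (B⁻¹ • u) = N u / B := by
    rw [map_smul_eq_mul, Real.norm_of_nonneg (inv_nonneg.2 hB.le), inv_mul_eq_div]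
  have hdiff (u v : X) : N (B⁻¹ • (u - z) - B⁻¹ • (v - z)) = N (u - v) / B := by
    rw [← smul_sub, sub_sub_sub_cancel_right, hscale]
  obtain ⟨i, hi⟩ := hN.exists_sub_le_of_le_one hγ ht
    (x := B⁻¹ • (x - z)) (y := fun i => B⁻¹ • (y i - z))
    (by rwa [hscale, div_le_one hB])
    (fun i => by rw [hscale, div_le_one hB]; exact hy i)
    (fun i j hij => by rw [hdiff, le_div_iff₀ hB]; exact hsep i j hij)
  rw [hdiff, div_le_iff₀ hB] at hi
  exact ⟨i, by linarith⟩

end BetaP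

theorem AdmitsBetaPNorm.exists_seminorm {X : Type*} [SeminormedAddCommGroup X] [NormedSpace ℝ X]
    {p γ : ℝ} (hX : AdmitsBetaPNorm X p γ) :
    ∃ N : Seminorm ℝ X, HasBetaP N p γ ∧
      ∃ a b : ℝ, 0 < a ∧ 0 < b ∧ ∀ x, a * ‖x‖ ≤ N x ∧ N x ≤ b * ‖x‖ := by
  obtain ⟨N, ⟨hadd, hsmul, a, b, ha, hab, hN⟩, hβ⟩ := hX
  exact ⟨Seminorm.of N hadd hsmul, hβ, a, b, ha, ha.trans_le hab, hN⟩

/-! ### Coarse Lipschitz maps and coarse quotients -/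

section CoarseLipschitz

/-- `f` is coarse Lipschitz: Lipschitz with constant `L` up to an additive error `C`. -/
def CoarseLipschitz {α β : Type*} (dα : α → α → ℝ) (dβ : β → β → ℝ) (f : α → β) (L C : ℝ) : Prop :=
  ∀ a b, dβ (f a) (f b) ≤ L * dα a b + C

variable {α β E : Type*} {dα : α → α → ℝ}

theorem CoarseQuotientMap.exists_coarseLipschitz {dβ : β → β → ℝ} {f : α → β} {K : ℝ}
    (hf : CoarseQuotientMap dα dβ f K) (hlip : LipLargeDist dα dβ f) (hdα : ∀ a b, 0 ≤ dα a b) :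
    ∃ L C : ℝ, 0 < L ∧ 0 ≤ C ∧ CoarseLipschitz dα dβ f L C := by
  obtain ⟨B, hB⟩ := hf.2.1 1 one_pos
  obtain ⟨M, hM⟩ := hlip 1 one_pos
  refine ⟨|M| + 1, |B|, by positivity, by positivity, fun a b => ?_⟩
  have hd := hdα a b
  rcases le_total (dα a b) 1 with hle | hge
  · calc dβ (f a) (f b) ≤ |B| := (hB a b hle).trans (le_abs_self B)
      _ ≤ (|M| + 1) * dα a b + |B| := le_add_of_nonneg_left (by positivity)
  · calc dβ (f a) (f b) ≤ M * dα a b := hM a b hge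
      _ ≤ (|M| + 1) * dα a b := by gcongr; linarith [le_abs_self M]
      _ ≤ (|M| + 1) * dα a b + |B| := le_add_of_nonneg_right (abs_nonneg B)

theorem CoarseLipschitz.norm_sub_le_of_norm_sub_le [SeminormedAddCommGroup E] {F : α → E}
    {L C K : ℝ} (hF : CoarseLipschitz dα (fun u v => ‖u - v‖) F L C) {a b : α} {u v : E}
    (ha : ‖F a - u‖ ≤ K) (hb : ‖F b - v‖ ≤ K) : ‖u - v‖ ≤ L * dα a b + C + 2 * K := by
  have htri : ‖u - v‖ ≤ ‖F a - F b‖ + (‖F a - u‖ + ‖F b - v‖) := by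
    simpa only [dist_eq_norm_sub] using dist_triangle4_left (F a) (F b) u v
  linarith [hF a b]

/-- The pairs `(a, w)` with `w ∈ W` within `K` of `f a`. A map `g` on `W` is composed with `f` by
sending such a pair to `g w`, while the distance of two pairs is that of their first components. -/
def nearPairs [PseudoMetricSpace β] (f : α → β) (W : Set β) (K : ℝ) : Set (α × W) :=
  {a | dist (f a.1) a.2 ≤ K}

variable [PseudoMetricSpace β] {dE : E → E → ℝ} {f : α → β} {W : Set β} {g : W → E} {K K' : ℝ}

theorem dist_snd_le_of_mem_nearPairs {a b : α × W} (ha : a ∈ nearPairs f W K)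
    (hb : b ∈ nearPairs f W K) : dist a.2.1 b.2.1 ≤ dist (f a.1) (f b.1) + 2 * K :=
  calc dist a.2.1 b.2.1
      ≤ dist (f a.1) (f b.1) + (dist (f a.1) a.2.1 + dist (f b.1) b.2.1) := dist_triangle4_left ..
    _ ≤ dist (f a.1) (f b.1) + (K + K) := add_le_add_right (add_le_add ha hb) _
    _ = dist (f a.1) (f b.1) + 2 * K := by ring

theorem CoarseLipschitz.comp_nearPairs {L C L' C' : ℝ}
    (hf : CoarseLipschitz dα (fun u v => dist u v) f L C)
    (hg : CoarseLipschitz (fun u v : W => dist u.1 v.1) dE g L' C') (hL' : 0 ≤ L') :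
    CoarseLipschitz (fun a b : nearPairs f W K => dα a.1.1 b.1.1) dE (fun a => g a.1.2)
      (L' * L) (L' * (C + 2 * K) + C') := fun a b =>
  calc dE (g a.1.2) (g b.1.2) ≤ L' * dist a.1.2.1 b.1.2.1 + C' := hg _ _
    _ ≤ L' * ((L * dα a.1.1 b.1.1 + C) + 2 * K) + C' := by
      gcongr
      exact (dist_snd_le_of_mem_nearPairs a.2 b.2).trans (add_le_add_left (hf _ _) _)
    _ = L' * L * dα a.1.1 b.1.1 + (L' * (C + 2 * K) + C') := by ring

theorem CoarseQuotientMap.comp_nearPairs (hK : 0 ≤ K)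
    (hf : CoarseQuotientMap dα (fun u v => dist u v) f K)
    (hg : CoarseQuotientMap (fun u v : W => dist u.1 v.1) dE g K') :
    CoarseQuotientMap (fun a b : nearPairs f W K => dα a.1.1 b.1.1) dE (fun a => g a.1.2) K' := by
  obtain ⟨f_surj, f_cont, f_co⟩ := hf
  obtain ⟨g_surj, g_cont, g_co⟩ := hg
  refine ⟨fun y => ?_, fun t ht => ?_, fun ε hε => ?_⟩
  · obtain ⟨w, rfl⟩ := g_surj y
    obtain ⟨a, ha⟩ := f_surj w
    exact ⟨⟨(a, w), by simpa [nearPairs, ha] using hK⟩, rfl⟩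
  · obtain ⟨B, hB⟩ := f_cont t ht
    obtain ⟨B', hB'⟩ := g_cont (|B| + 2 * K + 1) (by positivity)
    refine ⟨B', fun a b hab => hB' _ _ ?_⟩
    linarith [dist_snd_le_of_mem_nearPairs a.2 b.2, hB _ _ hab, le_abs_self B]
  · obtain ⟨δ, hδ, hgδ⟩ := g_co ε hε
    obtain ⟨δ', hδ', hfδ⟩ := f_co (K + δ) (by positivity)
    refine ⟨δ', hδ', fun ⟨⟨a, w⟩, haw⟩ y hy => ?_⟩
    obtain ⟨w', hww', hw'⟩ := hgδ w y hy
    obtain ⟨a', haa', ha'⟩ := hfδ a w' ((dist_triangle _ w.1 _).trans (add_le_add haw hww'))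
    exact ⟨⟨(a', w'), ha'⟩, haa', hw'⟩

end CoarseLipschitz

section CoarseLipschitzQuotient

variable {X α E : Type*} [SeminormedAddCommGroup E] [NormedSpace ℝ E] {ι : α → X} {F : α → E}
  {K : ℝ}

theorem CoarseQuotientMap.exists_coLipschitz [PseudoMetricSpace X] (hK : 0 ≤ K)
    (hF : CoarseQuotientMap (fun a b => dist (ι a) (ι b)) (fun u v => ‖u - v‖) F K) :
    ∃ D : ℝ, 0 < D ∧ ∀ (n : ℕ) (x : α) (y y' : E), ‖F x - y‖ ≤ K → dist y y' ≤ n →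
      ∃ a, dist (ι x) (ι a) ≤ D * n ∧ ‖F a - y'‖ ≤ K := by
  obtain ⟨D, hD, hco⟩ := hF.2.2 (K + 1) (by positivity)
  refine ⟨D, hD, fun n => ?_⟩
  simp only [← dist_eq_norm_sub] at hco ⊢
  induction n with
  | zero =>
    intro x y y' hy hyy'
    have hyy'0 : dist y y' ≤ 0 := by simpa only [Nat.cast_zero] using hyy'
    exact ⟨x, by simp, by linarith [dist_triangle (F x) y y']⟩
  | succ n ih =>
    intro x y y' hy hyy'
    obtain ⟨u, hyu, huy'⟩ := exists_dist_le_le zero_le_one n.cast_nonneg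
      (show dist y y' ≤ n + 1 by exact_mod_cast hyy')
    obtain ⟨a, hxa, ha⟩ := hco x u ((dist_triangle _ y _).trans (add_le_add hy hyu))
    obtain ⟨b, hab, hb⟩ := ih a u y' ha huy'
    refine ⟨b, (dist_triangle _ (ι a) _).trans ?_, hb⟩
    push_cast
    linarith

/-- `F` is coarse Lipschitz and, up to the error `K`, co-Lipschitz when the distance of two points
of its domain is the `N`-distance of their images under `ι`. Integral radii suffice in the second
condition, since only large ones matter. -/
structure CoarseLipschitzQuotient [AddCommGroup X] [Module ℝ X] (N : Seminorm ℝ X) (ι : α → X)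
    (F : α → E) (L C D K : ℝ) : Prop where
  L_pos : 0 < L
  C_nonneg : 0 ≤ C
  D_pos : 0 < D
  K_nonneg : 0 ≤ K
  coarseLipschitz : CoarseLipschitz (fun a b => N (ι a - ι b)) (fun u v => ‖u - v‖) F L C
  exists_near : ∀ (n : ℕ) (x : α) (y v : E), ‖F x - y‖ ≤ K → ‖v‖ ≤ n →
    ∃ a, N (ι x - ι a) ≤ D * n ∧ ‖F a - (y + v)‖ ≤ K

theorem CoarseQuotientMap.exists_coarseLipschitzQuotient [SeminormedAddCommGroup X]
    [NormedSpace ℝ X] {N : Seminorm ℝ X} {a b L C : ℝ} (ha : 0 < a) (hb : 0 < b)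
    (hN : ∀ x, a * ‖x‖ ≤ N x ∧ N x ≤ b * ‖x‖) (hK : 0 ≤ K) (hL : 0 < L) (hC : 0 ≤ C)
    (hF : CoarseQuotientMap (fun a b => dist (ι a) (ι b)) (fun u v => ‖u - v‖) F K)
    (hlip : CoarseLipschitz (fun a b => dist (ι a) (ι b)) (fun u v => ‖u - v‖) F L C) :
    ∃ D, CoarseLipschitzQuotient N ι F (L / a) C D K := by
  obtain ⟨D, hD, hco⟩ := hF.exists_coLipschitz hK
  refine ⟨b * D, by positivity, hC, by positivity, hK, fun u v => (hlip u v).trans ?_,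
    fun n x y v hy hv => ?_⟩
  · have hdist : dist (ι u) (ι v) ≤ N (ι u - ι v) / a := by
      rw [dist_eq_norm_sub, le_div_iff₀' ha]
      exact (hN _).1
    calc L * dist (ι u) (ι v) + C ≤ L * (N (ι u - ι v) / a) + C := by gcongr
      _ = L / a * N (ι u - ι v) + C := by ring
  · obtain ⟨w, hxw, hw⟩ := hco n x y (y + v) hy (by simpa using hv)
    refine ⟨w, (hN _).2.trans ?_, hw⟩
    rw [← dist_eq_norm_sub, mul_assoc]
    gcongr

end CoarseLipschitzQuotient

/-! ### Disjointly supported sequences -/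

section Lp

variable {I : Type*} {E : I → Type*} [∀ i, NormedAddCommGroup (E i)] {q : ℝ≥0∞}

theorem norm_add_rpow_of_disjoint_support (hq : 0 < q.toReal) {f g : lp E q}
    (h : ∀ i, f i = 0 ∨ g i = 0) :
    ‖f + g‖ ^ q.toReal = ‖f‖ ^ q.toReal + ‖g‖ ^ q.toReal := by
  refine (lp.hasSum_norm hq (f + g)).unique ?_
  convert (lp.hasSum_norm hq f).add (lp.hasSum_norm hq g) using 2 with i
  rcases h i with hi | hi <;> simp [hi, Real.zero_rpow hq.ne']

theorem norm_apply_le_norm_sub_of_apply_eq_zero (hq : q ≠ 0) (f : lp E q) {g : lp E q} {i : I}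
    (hg : g i = 0) : ‖f i‖ ≤ ‖f - g‖ := by
  simpa [hg] using lp.norm_apply_le_norm hq (f - g) i

end Lp

/-! ### Doubling the scale -/

section Doubling

variable {X α : Type*} [AddCommGroup X] [Module ℝ X] {N : Seminorm ℝ X} {ι : α → X}
  {q : ℝ≥0∞} [Fact (1 ≤ q)] {F : α → lp (fun _ : ℕ => ℝ) q} {K L C D p γ τ ρ e B : ℝ}

/-- From any point, `F` realises, by a move of length at most `B`, every displacement `ρ • v` with
`v` finitely supported and `‖v‖ ^ q ≤ e`, up to the error `K` and up to a tail `ρ • r` with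
`‖r‖ ≤ τ`, finitely supported and beginning after the end of `v`. -/
def Reaches (N : Seminorm ℝ X) (ι : α → X) (F : α → lp (fun _ : ℕ => ℝ) q) (K τ ρ e B : ℝ) : Prop :=
  ∀ (x : α) (y v : lp (fun _ : ℕ => ℝ) q) (n : ℕ), ‖F x - y‖ ≤ K →
    (∀ j, n ≤ j → v j = 0) → ‖v‖ ^ q.toReal ≤ e →
    ∃ (a : α) (r : lp (fun _ : ℕ => ℝ) q) (m : ℕ),
      (∀ j < n, r j = 0) ∧ (∀ j, m ≤ j → r j = 0) ∧ ‖r‖ ≤ τ ∧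
      N (ι x - ι a) ≤ B ∧ ‖F a - (y + ρ • (v + r))‖ ≤ K

theorem CoarseLipschitzQuotient.reaches (h : CoarseLipschitzQuotient N ι F L C D K)
    (hq : 1 ≤ q.toReal) (hτ : 0 ≤ τ) (n : ℕ) : Reaches N ι F K τ n 3 (3 * D * n) := by
  intro x y v _ hy _ hv
  have hv3 : ‖v‖ ≤ 3 := by
    rcases le_total ‖v‖ 1 with hle | hge
    · linarith
    · exact (Real.self_le_rpow_of_one_le hge hq).trans hv
  obtain ⟨a, hxa, ha⟩ := h.exists_near (3 * n) x y ((n : ℝ) • v) hy (by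
    rw [norm_smul, Real.norm_natCast, Nat.cast_mul, mul_comm]
    gcongr
    exact_mod_cast hv3)
  refine ⟨a, 0, 0, by simp, by simp, by simpa using hτ, ?_, by simpa using ha⟩
  push_cast at hxa
  linarith

theorem Reaches.exists_tip (h : Reaches N ι F K τ ρ e B) (hτ : 0 ≤ τ) (hq : 0 < q.toReal)
    {z : α} {y v r : lp (fun _ : ℕ => ℝ) q} {n i : ℕ}
    (hz : ‖F z - (y + ρ • (v + r))‖ ≤ K) (hv : ∀ j, n ≤ j → v j = 0)
    (hrn : ∀ j < n, r j = 0) (hri : ∀ j, i ≤ j → r j = 0) (hr : ‖r‖ ≤ τ) (hni : n ≤ i)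
    (hve : ‖v‖ ^ q.toReal ≤ e - 2 * τ ^ q.toReal) :
    ∃ (b : α) (w : lp (fun _ : ℕ => ℝ) q) (m : ℕ),
      (∀ j < i, w j = 0) ∧ w i = τ ∧ (∀ j, m ≤ j → w j = 0) ∧ ‖w‖ ≤ 2 * τ ∧
      N (ι z - ι b) ≤ B ∧ ‖F b - (y + (2 * ρ) • (v + (1 / 2 : ℝ) • w))‖ ≤ K := by
  set s : lp (fun _ : ℕ => ℝ) q := lp.single q i τ with hs
  have hs0 (j : ℕ) (hj : j ≠ i) : s j = 0 := by simp [hs, hj]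
  have hsτ : ‖s‖ = τ := by
    rw [hs, lp.norm_single (ENNReal.toReal_pos_iff.1 hq).1, Real.norm_of_nonneg hτ]
  have henergy : ‖v + -r + s‖ ^ q.toReal ≤ e := by
    rw [norm_add_rpow_of_disjoint_support hq, norm_add_rpow_of_disjoint_support hq, norm_neg, hsτ]
    · linarith [Real.rpow_le_rpow (norm_nonneg r) hr hq.le]
    · intro j
      rcases lt_or_ge j n with hj | hj
      · exact .inr (by simp [hrn j hj])
      · exact .inl (hv j hj)
    · intro j
      rcases eq_or_ne j i with rfl | hj
      · exact .inl (by simp [hv j hni, hri j le_rfl])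
      · exact .inr (hs0 j hj)
  have hsupp (j : ℕ) (hj : i + 1 ≤ j) : (v + -r + s) j = 0 := by
    simp [hv j (by omega), hri j (by omega), hs0 j (by omega)]
  obtain ⟨b, r', m, hr'i, hr'm, hr', hzb, hb⟩ := h z _ _ (i + 1) hz hsupp henergy
  refine ⟨b, s + r', max m (i + 1), fun j hj => ?_, ?_, fun j hj => ?_, ?_, hzb, ?_⟩
  · simp [hs0 j hj.ne, hr'i j (by omega)]
  · simp [hs, hr'i i (by omega)]
  · simp [hs0 j (by omega), hr'm j (by omega)]
  · linarith [norm_add_le s r']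
  · convert hb using 3
    module

theorem Reaches.double (hN : HasBetaP N p γ) (hγ : 0 < γ) (hq : 0 < q.toReal)
    (hF : CoarseLipschitz (fun a b => N (ι a - ι b)) (fun u v => ‖u - v‖) F L C)
    (h : Reaches N ι F K τ ρ e B) (hL : 0 < L) (hτ : 0 ≤ τ) (hρ : 0 ≤ ρ) (hB : 0 < B) {t : ℝ}
    (ht : 0 < t) (hsep : L * (t * B) + C + 2 * K ≤ ρ * τ) :
    Reaches N ι F K τ (2 * ρ) (e - 2 * τ ^ q.toReal) (2 * B * (1 - γ / 2 * t ^ p)) := by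
  intro x y v n hy hv hve
  have hτq : 0 ≤ τ ^ q.toReal := Real.rpow_nonneg hτ _
  obtain ⟨z, r, m, hrn, hrm, hr, hxz, hz⟩ := h x y v n hy hv (by linarith)
  choose b w m' hwi hwτ hwm hw hzb hb using fun i : ℕ =>
    h.exists_tip (i := n + m + i) hτ hq hz hv hrn (fun j hj => hrm j (by omega)) hr (by omega) hve
  have hw_sep_of_lt (i j : ℕ) (hij : i < j) : τ ≤ ‖w i - w j‖ := by
    have hle := norm_apply_le_norm_sub_of_apply_eq_zero (ENNReal.toReal_pos_iff.1 hq).1.ne' (w i)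
      (hwi j (n + m + i) (by omega))
    rwa [hwτ, Real.norm_of_nonneg hτ] at hle
  have hw_sep (i j : ℕ) (hij : i ≠ j) : τ ≤ ‖w i - w j‖ := by
    rcases hij.lt_or_gt with hlt | hgt
    · exact hw_sep_of_lt i j hlt
    · exact norm_sub_rev (w j) (w i) ▸ hw_sep_of_lt j i hgt
  have hb_sep (i j : ℕ) (hij : i ≠ j) : t * B ≤ N (ι (b i) - ι (b j)) := by
    have htargets : ρ * τ ≤ L * N (ι (b i) - ι (b j)) + C + 2 * K :=
      calc ρ * τ ≤ ρ * ‖w i - w j‖ := by gcongr; exact hw_sep i j hij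
        _ = ‖(y + (2 * ρ) • (v + (1 / 2 : ℝ) • w i)) -
              (y + (2 * ρ) • (v + (1 / 2 : ℝ) • w j))‖ := by
          rw [← Real.norm_of_nonneg hρ, ← norm_smul, Real.norm_of_nonneg hρ]
          congr 1
          module
        _ ≤ _ := hF.norm_sub_le_of_norm_sub_le (hb i) (hb j)
    exact le_of_mul_le_mul_left (by linarith) hL
  obtain ⟨i, hi⟩ := hN.exists_sub_le hγ ht hB hxz
    (fun i => by rw [map_sub_rev]; exact hzb i) hb_sep
  refine ⟨b i, (1 / 2 : ℝ) • w i, m' i, fun j hj => ?_, fun j hj => ?_, ?_, hi, hb i⟩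
  · simp [hwi i j (by omega)]
  · simp [hwm i j hj]
  · rw [norm_smul, Real.norm_of_nonneg (by norm_num)]
    linarith [hw i]

theorem Reaches.iterate_double (hN : HasBetaP N p γ) (hγ : 0 < γ) (hq : 0 < q.toReal)
    (hF : CoarseLipschitz (fun a b => N (ι a - ι b)) (fun u v => ‖u - v‖) F L C)
    (h : Reaches N ι F K τ ρ e B) (hL : 0 < L) (hCK : 0 ≤ C + 2 * K) (hτ : 0 ≤ τ) (hρ : 0 ≤ ρ)
    (hB : 0 < B) {t : ℝ} (ht : 0 < t) (hθ : 0 < 1 - γ / 2 * t ^ p)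
    (hsep : L * (t * B) + (C + 2 * K) ≤ ρ * τ) (s : ℕ) :
    Reaches N ι F K τ (2 ^ s * ρ) (e - s * (2 * τ ^ q.toReal))
      (2 ^ s * B * (1 - γ / 2 * t ^ p) ^ s) := by
  set θ := 1 - γ / 2 * t ^ p with hθ_def
  induction s with
  | zero => simpa using h
  | succ s ih =>
    have hθ1 : θ ≤ 1 := by
      rw [hθ_def]
      linarith [show 0 ≤ γ / 2 * t ^ p by positivity]
    have hsep' : L * (t * (2 ^ s * B * θ ^ s)) + C + 2 * K ≤ 2 ^ s * ρ * τ :=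
      calc L * (t * (2 ^ s * B * θ ^ s)) + C + 2 * K
          = 2 ^ s * (L * (t * B)) * θ ^ s + 1 * (C + 2 * K) := by ring
        _ ≤ 2 ^ s * (L * (t * B)) * 1 + 2 ^ s * (C + 2 * K) := by
          gcongr
          · exact pow_le_one₀ hθ.le hθ1
          · exact one_le_pow₀ one_le_two
        _ = 2 ^ s * (L * (t * B) + (C + 2 * K)) := by ring
        _ ≤ 2 ^ s * (ρ * τ) := by gcongr
        _ = 2 ^ s * ρ * τ := by ring
    convert ih.double hN hγ hq hF hL hτ (by positivity) (by positivity) ht hsep' using 1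
    · ring
    · push_cast
      ring
    · rw [← hθ_def]
      ring

theorem Reaches.scale_le [Nonempty α] (h : Reaches N ι F K τ ρ e B)
    (hF : CoarseLipschitz (fun a b => N (ι a - ι b)) (fun u v => ‖u - v‖) F L C)
    (hL : 0 ≤ L) (hK : 0 ≤ K) (hρ : 0 ≤ ρ) (he : 1 ≤ e) : ρ ≤ L * B + C + 2 * K := by
  obtain ⟨x⟩ := ‹Nonempty α›
  have hq0 : 0 < q := zero_lt_one.trans_le Fact.out
  set v : lp (fun _ : ℕ => ℝ) q := lp.single q 0 1 with hv
  have hFx : ‖F x - F x‖ ≤ K := by simpa using hK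
  obtain ⟨a, r, -, hr, -, -, hxa, ha⟩ := h x (F x) v 1 hFx
    (fun j hj => lp.single_apply_ne q 0 1 (by omega))
    (by simpa [hv, lp.norm_single hq0] using he)
  have hvr : 1 ≤ ‖v + r‖ := by
    simpa [hv, hr 0 one_pos] using lp.norm_apply_le_norm hq0.ne' (v + r) 0
  calc ρ ≤ ρ * ‖v + r‖ := le_mul_of_one_le_right hρ hvr
    _ = ‖F x - (F x + ρ • (v + r))‖ := by
      rw [sub_add_cancel_left, norm_neg, norm_smul, Real.norm_of_nonneg hρ]
    _ ≤ L * N (ι x - ι a) + C + 2 * K := hF.norm_sub_le_of_norm_sub_le hFx ha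
    _ ≤ L * B + C + 2 * K := by gcongr

end Doubling

/-! ### The contradiction -/

theorem tendsto_one_sub_mul_rpow_neg (c : ℝ) {e : ℝ} (he : 0 < e) :
    Tendsto (fun k : ℕ => 1 - c * (k : ℝ) ^ (-e)) atTop (nhds 1) := by
  simpa using
    (((tendsto_rpow_neg_atTop he).comp tendsto_natCast_atTop_atTop).const_mul c).const_sub 1

theorem tendsto_one_sub_mul_rpow_neg_pow {c e : ℝ} (hc : 0 < c) (he0 : 0 < e) (he1 : e < 1) :
    Tendsto (fun k : ℕ => (1 - c * (k : ℝ) ^ (-e)) ^ k) atTop (nhds 0) := by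
  have hexp : Tendsto (fun k : ℕ => Real.exp (-(c * (k : ℝ) ^ (1 - e)))) atTop (nhds 0) :=
    Real.tendsto_exp_neg_atTop_nhds_zero.comp
      (((tendsto_rpow_atTop (sub_pos.2 he1)).comp tendsto_natCast_atTop_atTop).const_mul_atTop hc)
  have hpos : ∀ᶠ k : ℕ in atTop, 0 < 1 - c * (k : ℝ) ^ (-e) :=
    (tendsto_one_sub_mul_rpow_neg c he0).eventually_const_lt one_pos
  refine squeeze_zero' (hpos.mono fun k hk => (pow_pos hk k).le) ?_ hexp
  filter_upwards [hpos, eventually_gt_atTop 0] with k hk hk0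
  have hk0' : (0 : ℝ) < k := Nat.cast_pos.2 hk0
  calc (1 - c * (k : ℝ) ^ (-e)) ^ k ≤ Real.exp (-(c * (k : ℝ) ^ (-e))) ^ k :=
        pow_le_pow_left₀ hk.le (Real.one_sub_le_exp_neg _) k
    _ = Real.exp (-(c * (k : ℝ) ^ (1 - e))) := by
        rw [← Real.exp_nat_mul, sub_eq_neg_add, Real.rpow_add_one hk0'.ne']
        ring_nf

theorem exists_rpow_mul_natCast_eq_one_and_mul_pow_lt_one {p q γ A : ℝ} (hp : 0 < p) (hpq : p < q)
    (hγ : 0 < γ) (hA : 0 < A) :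
    ∃ (k : ℕ) (τ : ℝ), 0 < τ ∧ k * τ ^ q = 1 ∧ 0 < 1 - γ / 2 * (τ / A) ^ p ∧
      A * (1 - γ / 2 * (τ / A) ^ p) ^ k < 1 := by
  have hq : 0 < q := hp.trans hpq
  set c := γ / 2 / A ^ p with hc_def
  have hc : 0 < c := by positivity
  have he : 0 < p / q := by positivity
  obtain ⟨k, hpos, hsmall, hk0⟩ :=
    (((tendsto_one_sub_mul_rpow_neg c he).eventually_const_lt one_pos).and
    (((tendsto_one_sub_mul_rpow_neg_pow hc he ((div_lt_one hq).2 hpq)).eventually_lt_const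
      (inv_pos.2 hA)).and (eventually_gt_atTop 0))).exists
  have hk : (0 : ℝ) < k := Nat.cast_pos.2 hk0
  have hθ : 1 - γ / 2 * ((k : ℝ) ^ (-q⁻¹) / A) ^ p = 1 - c * (k : ℝ) ^ (-(p / q)) := by
    rw [Real.div_rpow (by positivity) hA.le, ← Real.rpow_mul hk.le, hc_def,
      show -q⁻¹ * p = -(p / q) by ring]
    ring
  refine ⟨k, (k : ℝ) ^ (-q⁻¹), by positivity, ?_, hθ ▸ hpos, ?_⟩
  · rw [← Real.rpow_mul hk.le, neg_mul, inv_mul_cancel₀ hq.ne', Real.rpow_neg_one,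
      mul_inv_cancel₀ hk.ne']
  · rwa [hθ, mul_comm, ← lt_div_iff₀ hA, one_div]

theorem not_coarseLipschitzQuotient_lp {X α : Type*} [AddCommGroup X] [Module ℝ X] [Nonempty α]
    {N : Seminorm ℝ X} {p γ : ℝ} (hN : HasBetaP N p γ) (hγ : 0 < γ) (hp : 0 < p)
    {q : ℝ≥0∞} [Fact (1 ≤ q)] (hpq : p < q.toReal) (ι : α → X)
    (F : α → lp (fun _ : ℕ => ℝ) q) (L C D K : ℝ) :
    ¬ CoarseLipschitzQuotient N ι F L C D K := by
  intro h
  have hL := h.L_pos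
  have hC := h.C_nonneg
  have hD := h.D_pos
  have hK := h.K_nonneg
  have hq : 0 < q.toReal := hp.trans hpq
  have hq1 : 1 ≤ q.toReal := by
    simpa using ENNReal.toReal_mono (ENNReal.toReal_pos_iff.1 hq).2.ne (Fact.out : 1 ≤ q)
  set A := 2 * L * (3 * D) with hA_def
  have hA : 0 < A := by positivity
  obtain ⟨k, τ, hτ, hkτ, hθ, hsmall⟩ :=
    exists_rpow_mul_natCast_eq_one_and_mul_pow_lt_one hp hpq hγ hA
  set θ := 1 - γ / 2 * (τ / A) ^ p
  obtain ⟨n, hn⟩ := exists_nat_gt (max (2 * (C + 2 * K)) (2 * (C + 2 * K) / τ))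
  obtain ⟨hn, hnτ⟩ := max_lt_iff.1 hn
  have hn0 : (0 : ℝ) < n := by linarith [show 0 ≤ C + 2 * K by positivity]
  have hsep : L * (τ / A * (3 * D * n)) + (C + 2 * K) ≤ n * τ := by
    have hhalf : L * (τ / A * (3 * D * n)) = n * τ / 2 := by
      rw [hA_def]
      field_simp
    rw [div_lt_iff₀ hτ] at hnτ
    linarith
  have hreach := (h.reaches hq1 hτ.le n).iterate_double hN hγ hq h.coarseLipschitz hL
    (by positivity) hτ.le hn0.le (by positivity) (by positivity) hθ hsep k
  have hle := hreach.scale_le h.coarseLipschitz hL.le hK (by positivity) (by linarith)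
  have hshort : L * (2 ^ k * (3 * D * n) * θ ^ k) ≤ 2 ^ k * n / 2 :=
    calc L * (2 ^ k * (3 * D * n) * θ ^ k) = 2 ^ k * n / 2 * (A * θ ^ k) := by ring
      _ ≤ 2 ^ k * n / 2 := mul_le_of_le_one_right (by positivity) hsmall.le
  have hgrow : (n : ℝ) ≤ 2 ^ k * n := le_mul_of_one_le_left hn0.le (one_le_pow₀ one_le_two)
  linarith

theorem beta_p_coarse_subquotient_general {p γ : ℝ} (hp : 0 < p) (hγ : 0 < γ)
    {X : Type*} [SeminormedAddCommGroup X] [NormedSpace ℝ X] (hX : AdmitsBetaPNorm X p γ)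
    {Y : Type*} [PseudoMetricSpace Y]
    (hY : ∃ (Z : Set X) (f : Z → Y) (K : ℝ), 0 ≤ K ∧
      CoarseQuotientMap (fun a b : Z => dist a.1 b.1) (fun a b : Y => dist a b) f K ∧
      LipLargeDist (fun a b : Z => dist a.1 b.1) (fun a b : Y => dist a b) f)
    {q : ℝ≥0∞} [Fact (1 ≤ q)] (hpq : p < q.toReal) :
    ¬ ∃ (W : Set Y) (g : W → lp (fun _ : ℕ => ℝ) q) (K' : ℝ), 0 ≤ K' ∧
      CoarseQuotientMap (fun a b : W => dist a.1 b.1)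
        (fun a b : lp (fun _ : ℕ => ℝ) q => ‖a - b‖) g K' ∧
      LipLargeDist (fun a b : W => dist a.1 b.1)
        (fun a b : lp (fun _ : ℕ => ℝ) q => ‖a - b‖) g := by
  rintro ⟨W, g, K', hK', hg, g_lip⟩
  obtain ⟨Z, f, K, hK, hf, f_lip⟩ := hY
  obtain ⟨N, hN, a, b, ha, hb, hab⟩ := hX.exists_seminorm
  obtain ⟨L, C, hL, hC, hfL⟩ := hf.exists_coarseLipschitz f_lip fun _ _ => dist_nonneg
  obtain ⟨L', C', hL', hC', hgL⟩ := hg.exists_coarseLipschitz g_lip fun _ _ => dist_nonneg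
  have hgf := CoarseQuotientMap.comp_nearPairs hK hf hg
  have : Nonempty (nearPairs f W K) := hgf.1.nonempty
  obtain ⟨D, hF⟩ := hgf.exists_coarseLipschitzQuotient (ι := fun a : nearPairs f W K => a.1.1.1)
    ha hb hab hK' (by positivity) (by positivity) (hfL.comp_nearPairs hgL hL'.le)
  exact not_coarseLipschitzQuotient_lp hN hγ hp hpq _ _ _ _ _ _ hF

/-- Theorem 4.16: if `X` admits an equivalent norm with property
(β_p) and a Banach space `Y` is a coarse quotient of a subset of `X` via a map
Lipschitz for large distances, then for `q > p` the space `ℓ_q` is not a coarse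
quotient of a subset of `Y` via a map Lipschitz for large distances. -/
theorem beta_p_coarse_subquotient
    (p γ : ℝ) (hp : 1 < p) (hγ : 0 < γ)
    (X : Type*) [NormedAddCommGroup X] [NormedSpace ℝ X] [CompleteSpace X]
    (hX : AdmitsBetaPNorm X p γ)
    (Y : Type*) [NormedAddCommGroup Y] [NormedSpace ℝ Y] [CompleteSpace Y]
    (hY : ∃ (Z : Set X) (f : Z → Y) (K : ℝ), 0 ≤ K ∧
      CoarseQuotientMap (fun a b : Z => dist a.1 b.1) (fun a b : Y => dist a b) f K ∧
      LipLargeDist (fun a b : Z => dist a.1 b.1) (fun a b : Y => dist a b) f) :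
    ∀ q : ℝ, p < q →
      ¬ ∃ (W : Set Y) (g : W → lp (fun _ : ℕ => ℝ) (ENNReal.ofReal q)) (K' : ℝ), 0 ≤ K' ∧
        CoarseQuotientMap (fun a b : W => dist a.1 b.1)
          (fun a b : lp (fun _ : ℕ => ℝ) (ENNReal.ofReal q) => ‖a - b‖) g K' ∧
        LipLargeDist (fun a b : W => dist a.1 b.1)
          (fun a b : lp (fun _ : ℕ => ℝ) (ENNReal.ofReal q) => ‖a - b‖) g := by
  intro q hpq
  have : Fact (1 ≤ ENNReal.ofReal q) := ⟨ENNReal.one_le_ofReal.2 (hp.trans hpq).le⟩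
  exact beta_p_coarse_subquotient_general (one_pos.trans hp) hγ hX hY
    (by rwa [ENNReal.toReal_ofReal (by linarith)])

end
end

section
/- Let p ∈ (1,2). There does not exist a constant μ ∈ (0,∞) such that for every integer h ≥ 1 and every λ ≥ 1, if T^ω_h is λ-finitely representable in ℓ_p, then c_{ℓ_p}(T^ω_h) ≤ μ·λ. -/
open Set Function Filter

open scoped ENNReal

attribute [local instance] Classical.propDecidable

noncomputable section

def LipUB {α β : Type*} (dα : α → α → ℝ) (dβ : β → β → ℝ) (f : α → β) (L : ℝ) : Prop :=
  ∀ a b : α, dβ (f a) (f b) ≤ L * dα a b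

def CoLipUB {α β : Type*} (dα : α → α → ℝ) (dβ : β → β → ℝ) (f : α → β) (C : ℝ) : Prop :=
  ∀ a b : α, dα a b ≤ C * dβ (f a) (f b)

def IsBiLipEmb {α β : Type*} (dα : α → α → ℝ) (dβ : β → β → ℝ) (f : α → β) : Prop :=
  Function.Injective f ∧ ∃ L C : ℝ, LipUB dα dβ f L ∧ CoLipUB dα dβ f C

def distortionSet (α β : Type*) (dα : α → α → ℝ) (dβ : β → β → ℝ) : Set ℝ :=
  {D | ∃ f : α → β, Function.Injective f ∧ ∃ L C : ℝ,
    LipUB dα dβ f L ∧ CoLipUB dα dβ f C ∧ D = L * C}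

def cDist (α β : Type*) (dα : α → α → ℝ) (dβ : β → β → ℝ) : ℝ≥0∞ :=
  ⨅ D ∈ distortionSet α β dα dβ, ENNReal.ofReal D
/-!
The best distortion of the tree of height `h = 2 ^ n` in `ℓ_p` grows at least like `n ^ (1 / p)`,
whereas its finite subsets embed with distortion of order `√n`; as `1 / p > 1 / 2`, no constant `μ`
can compensate.

Lower bound: choose a finite set of coordinates carrying almost all of an edge from `x` to `y`. The
children of `y` are infinitely many `2`-separated points, so the edge from `y` to one of them has a
definite part outside these coordinates. That part is nearly disjoint from the first edge, and since
`p > 1` this makes the `p`-th power of the length of the two-edge path smaller than its maximum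
`2 ^ p * A` by a fixed amount. Selecting such grandchildren gives an embedding of the tree of half
the height whose `p`-th power of the edge length has dropped by a constant, and this can be repeated
`n` times.

Upper bound: weighting the prefix `s` of `x` by `√(d(x, s) + 1)` embeds the tree into Hilbert space
with distortion of order `√(log h)`, because the squares of `√(i + 1) - √i` have logarithmic partial
sums. Only finitely many coordinates matter for a finite subset, and Rademacher sums carry these
into `ℓ_p` with bounded distortion by Khinchine's inequality.
-/

open scoped BigOperators

section TreeMetric

theorem lcpLen_append_append (z u v : List ℕ) :
    lcpLen (z ++ u) (z ++ v) = z.length + lcpLen u v := by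
  induction z with
  | nil => simp
  | cons a z ih =>
    simp only [List.cons_append, lcpLen, if_true, ih, List.length_cons]
    ring

theorem treeDist_append_append (z u v : List ℕ) :
    treeDist (z ++ u) (z ++ v) = treeDist u v := by
  simp only [treeDist, lcpLen_append_append, List.length_append, Nat.cast_add]
  ring

theorem treeDist_append_singleton_self (x : List ℕ) (a : ℕ) : treeDist (x ++ [a]) x = 1 := by
  have h := treeDist_append_append x [a] []
  rw [List.append_nil] at h
  rw [h]
  simp [treeDist, lcpLen]

theorem treeDist_siblings (x : List ℕ) {a b : ℕ} (hab : a ≠ b) :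
    treeDist (x ++ [a]) (x ++ [b]) = 2 := by
  rw [treeDist_append_append]
  norm_num [treeDist, lcpLen, hab]

theorem exists_eq_append_lcpLen (x y : List ℕ) :
    ∃ z u v, x = z ++ u ∧ y = z ++ v ∧ lcpLen x y = z.length := by
  induction x generalizing y with
  | nil => exact ⟨[], [], y, by simp [lcpLen]⟩
  | cons a x ih =>
    rcases y with _ | ⟨b, y⟩
    · exact ⟨[], a :: x, [], by simp [lcpLen]⟩
    by_cases hab : a = b
    · obtain ⟨z, u, v, rfl, rfl, hz⟩ := ih y
      exact ⟨a :: z, u, v, by simp [lcpLen, hab, hz]⟩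
    · exact ⟨[], a :: x, b :: y, by simp [lcpLen, hab]⟩

theorem exists_eq_append_treeDist (x y : List ℕ) :
    ∃ z u v, x = z ++ u ∧ y = z ++ v ∧ treeDist x y = u.length + v.length := by
  obtain ⟨z, u, v, rfl, rfl, hz⟩ := exists_eq_append_lcpLen x y
  refine ⟨z, u, v, rfl, rfl, ?_⟩
  simp only [treeDist, hz, List.length_append, Nat.cast_add]
  ring

theorem lcpLen_comm (x y : List ℕ) : lcpLen x y = lcpLen y x := by
  induction x generalizing y with
  | nil => cases y <;> rfl
  | cons a x ih => cases y <;> simp [lcpLen, ih, eq_comm]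

theorem lcpLen_le_length (x y : List ℕ) : lcpLen x y ≤ x.length := by
  obtain ⟨z, u, v, rfl, -, hz⟩ := exists_eq_append_lcpLen x y
  simp [hz]

theorem length_le_lcpLen {s x y : List ℕ} (hx : s <+: x) (hy : s <+: y) :
    s.length ≤ lcpLen x y := by
  obtain ⟨u, rfl⟩ := hx
  obtain ⟨v, rfl⟩ := hy
  simp [lcpLen_append_append]

theorem eq_of_treeDist_le_zero {x y : List ℕ} (h : treeDist x y ≤ 0) : x = y := by
  obtain ⟨z, u, v, rfl, rfl, hd⟩ := exists_eq_append_treeDist x y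
  have hlen : u.length + v.length ≤ 0 := by exact_mod_cast hd ▸ h
  have hu : u = [] := List.eq_nil_of_length_eq_zero (by lia)
  have hv : v = [] := List.eq_nil_of_length_eq_zero (by lia)
  rw [hu, hv]

theorem dist_append_le_of_edges {X : Type*} [PseudoMetricSpace X] {g : List ℕ → X} {h : ℕ} {L : ℝ}
    (hg : ∀ x a, x.length < h → dist (g (x ++ [a])) (g x) ≤ L) (z u : List ℕ)
    (hu : (z ++ u).length ≤ h) : dist (g (z ++ u)) (g z) ≤ L * u.length := by
  induction u using List.reverseRecOn with
  | nil => simp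
  | append_singleton u a ih =>
    have hlt : (z ++ u).length < h := by
      simp only [List.length_append, List.length_singleton] at hu ⊢
      lia
    calc dist (g (z ++ (u ++ [a]))) (g z)
        ≤ dist (g (z ++ u ++ [a])) (g (z ++ u)) + dist (g (z ++ u)) (g z) := by
          rw [← List.append_assoc]
          exact dist_triangle _ _ _
      _ ≤ L + L * u.length := add_le_add (hg _ a hlt) (ih hlt.le)
      _ = L * (u ++ [a]).length := by
          rw [List.length_append, List.length_singleton, Nat.cast_succ]
          ring

theorem dist_le_mul_treeDist_of_edges {X : Type*} [PseudoMetricSpace X] {g : List ℕ → X} {h : ℕ}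
    {L : ℝ} (hg : ∀ x a, x.length < h → dist (g (x ++ [a])) (g x) ≤ L) {x y : List ℕ}
    (hx : x.length ≤ h) (hy : y.length ≤ h) : dist (g x) (g y) ≤ L * treeDist x y := by
  obtain ⟨z, u, v, rfl, rfl, hd⟩ := exists_eq_append_treeDist x y
  calc dist (g (z ++ u)) (g (z ++ v)) ≤ dist (g (z ++ u)) (g z) + dist (g (z ++ v)) (g z) :=
        dist_triangle_right _ _ _
    _ ≤ L * u.length + L * v.length :=
        add_le_add (dist_append_le_of_edges hg z u hx) (dist_append_le_of_edges hg z v hy)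
    _ = L * treeDist (z ++ u) (z ++ v) := by rw [hd]; ring

end TreeMetric

section Distortion

variable {α β : Type*} {dα : α → α → ℝ} {dβ : β → β → ℝ} {f : α → β} {L C : ℝ}

theorem cDist_le (hf : Injective f) (hL : LipUB dα dβ f L) (hC : CoLipUB dα dβ f C) :
    cDist α β dα dβ ≤ ENNReal.ofReal (L * C) :=
  iInf₂_le _ ⟨f, hf, L, C, hL, hC, rfl⟩

theorem CoLipUB.pos (hC : CoLipUB dα dβ f C) {a b : α} (hab : 0 < dα a b)
    (hf : 0 ≤ dβ (f a) (f b)) : 0 < C :=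
  pos_of_mul_pos_left (hab.trans_le (hC a b)) hf

theorem LipUB.nonneg (hL : LipUB dα dβ f L) {a b : α} (hab : 0 < dα a b)
    (hf : 0 ≤ dβ (f a) (f b)) : 0 ≤ L :=
  nonneg_of_mul_nonneg_left (hf.trans (hL a b)) hab

end Distortion

section Khinchine

open Finset

variable {ι : Type*}

theorem expect_powerset_insert {S : Finset ι} {b : ι} (hb : b ∉ S) (F : Finset ι → ℝ) :
    𝔼 t ∈ (insert b S).powerset, F t = 𝔼 t ∈ S.powerset, (F t + F (insert b t)) / 2 := by
  simp only [expect_eq_sum_div_card, sum_powerset_insert hb, card_powerset,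
    card_insert_of_notMem hb, ← sum_div, sum_add_distrib]
  push_cast
  field_simp
  ring

theorem expect_le_expect_rpow_rpow_inv {s : Finset ι} (hs : s.Nonempty) {r : ℝ} (hr : 1 ≤ r)
    {f : ι → ℝ} (hf : ∀ i, 0 ≤ f i) : 𝔼 i ∈ s, f i ≤ (𝔼 i ∈ s, f i ^ r) ^ r⁻¹ := by
  simpa [expect_const hs] using
    Real.compact_inner_le_weight_mul_Lp_of_nonneg s hr (fun _ => zero_le_one) hf

/-- The Rademacher sum `∑ s ∈ S, ε s * a s` as a linear functional of the coefficients `a`. The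
choice of signs `ε` is encoded by the set `t` where `ε = 1`, so that averaging over
`t ∈ S.powerset` is the expectation over independent uniform signs. -/
def rademacherSum (S t : Finset ι) : (ι → ℝ) →ₗ[ℝ] ℝ :=
  ∑ s ∈ S, (if s ∈ t then (1 : ℝ) else -1) • LinearMap.proj s

theorem rademacherSum_apply (S t : Finset ι) (a : ι → ℝ) :
    rademacherSum S t a = ∑ s ∈ S, (if s ∈ t then 1 else -1) * a s := by
  simp only [rademacherSum, LinearMap.sum_apply, LinearMap.smul_apply, LinearMap.proj_apply,
    smul_eq_mul]

theorem rademacherSum_insert_left {S t : Finset ι} {b : ι} (hb : b ∉ S) (ht : t ⊆ S) (a : ι → ℝ) :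
    rademacherSum (insert b S) t a = rademacherSum S t a - a b := by
  rw [rademacherSum_apply, sum_insert hb, if_neg (fun h => hb (ht h)), rademacherSum_apply]
  ring

theorem rademacherSum_insert_insert {S : Finset ι} {b : ι} (hb : b ∉ S) (t : Finset ι)
    (a : ι → ℝ) : rademacherSum (insert b S) (insert b t) a = rademacherSum S t a + a b := by
  have hS : ∀ s ∈ S, (s ∈ insert b t ↔ s ∈ t) := fun s hs =>
    ⟨fun h => (mem_insert.1 h).resolve_left (ne_of_mem_of_not_mem hs hb), mem_insert_of_mem⟩
  rw [rademacherSum_apply, sum_insert hb, if_pos (mem_insert_self b t), rademacherSum_apply,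
    sum_congr rfl fun s hs => by rw [if_congr (hS s hs) rfl rfl]]
  ring

theorem expect_rademacherSum_sq (S : Finset ι) (a : ι → ℝ) :
    𝔼 t ∈ S.powerset, rademacherSum S t a ^ 2 = ∑ s ∈ S, a s ^ 2 := by
  induction S using Finset.induction_on with
  | empty => simp [rademacherSum]
  | insert b S hb ih =>
    calc 𝔼 t ∈ (insert b S).powerset, rademacherSum (insert b S) t a ^ 2
        = 𝔼 t ∈ S.powerset, (rademacherSum S t a ^ 2 + a b ^ 2) := by
          rw [expect_powerset_insert hb]
          refine expect_congr rfl fun t ht => ?_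
          rw [rademacherSum_insert_left hb (mem_powerset.1 ht), rademacherSum_insert_insert hb]
          ring
      _ = ∑ s ∈ insert b S, a s ^ 2 := by
          rw [expect_add_distrib, expect_const (powerset_nonempty S), ih, sum_insert hb, add_comm]

theorem expect_rademacherSum_pow_four_le (S : Finset ι) (a : ι → ℝ) :
    𝔼 t ∈ S.powerset, rademacherSum S t a ^ 4 ≤ 3 * (∑ s ∈ S, a s ^ 2) ^ 2 := by
  induction S using Finset.induction_on with
  | empty => simp [rademacherSum]
  | insert b S hb ih =>
    calc 𝔼 t ∈ (insert b S).powerset, rademacherSum (insert b S) t a ^ 4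
        = 𝔼 t ∈ S.powerset,
            (rademacherSum S t a ^ 4 + 6 * a b ^ 2 * rademacherSum S t a ^ 2 + a b ^ 4) := by
          rw [expect_powerset_insert hb]
          refine expect_congr rfl fun t ht => ?_
          rw [rademacherSum_insert_left hb (mem_powerset.1 ht), rademacherSum_insert_insert hb]
          ring
      _ = 𝔼 t ∈ S.powerset, rademacherSum S t a ^ 4 + 6 * a b ^ 2 * ∑ s ∈ S, a s ^ 2
            + a b ^ 4 := by
          rw [expect_add_distrib, expect_add_distrib, ← mul_expect, expect_rademacherSum_sq,
            expect_const (powerset_nonempty S)]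
      _ ≤ 3 * (∑ s ∈ S, a s ^ 2) ^ 2 + 6 * a b ^ 2 * ∑ s ∈ S, a s ^ 2 + 3 * a b ^ 4 := by
          have hb4 : 0 ≤ a b ^ 4 := by positivity
          linarith
      _ = 3 * (∑ s ∈ insert b S, a s ^ 2) ^ 2 := by
          rw [sum_insert hb]
          ring

theorem sq_mul_sq_sub_pow_four_le {M t : ℝ} (hM : 0 ≤ M) (ht : 0 ≤ t) :
    M ^ 2 * t ^ 2 - t ^ 4 ≤ M ^ 3 * t := by
  have key : 0 ≤ M ^ 3 - M ^ 2 * t + t ^ 3 := by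
    rcases le_total t M with h | h
    · nlinarith [mul_nonneg (sq_nonneg M) (sub_nonneg.2 h), pow_nonneg ht 3]
    · nlinarith [mul_nonneg ht (sub_nonneg.2 (pow_le_pow_left₀ hM h 2)), pow_nonneg hM 3]
  nlinarith [mul_nonneg ht key]

/- The second and fourth moments bound the first from below: average
`M² t² - t⁴ ≤ M³ t` over `t = |∑ ± a s|`, with `M` twice the standard deviation. -/
theorem sqrt_div_eight_le_expect_abs_rademacherSum (S : Finset ι) (a : ι → ℝ) :
    √(∑ s ∈ S, a s ^ 2) / 8 ≤ 𝔼 t ∈ S.powerset, |rademacherSum S t a| := by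
  set σ := √(∑ s ∈ S, a s ^ 2)
  have hσ : σ ^ 2 = ∑ s ∈ S, a s ^ 2 := Real.sq_sqrt (sum_nonneg fun _ _ => sq_nonneg _)
  rcases (Real.sqrt_nonneg (∑ s ∈ S, a s ^ 2)).eq_or_lt with h0 | hpos
  · rw [show σ = 0 from h0.symm, zero_div]
    exact expect_nonneg fun _ _ => abs_nonneg _
  have hmoments : σ ^ 4 ≤ 8 * σ ^ 3 * 𝔼 t ∈ S.powerset, |rademacherSum S t a| := by
    calc σ ^ 4 = (2 * σ) ^ 2 * σ ^ 2 - 3 * (σ ^ 2) ^ 2 := by ring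
      _ ≤ (2 * σ) ^ 2 * 𝔼 t ∈ S.powerset, rademacherSum S t a ^ 2
            - 𝔼 t ∈ S.powerset, rademacherSum S t a ^ 4 := by
          rw [expect_rademacherSum_sq, hσ]
          gcongr
          exact expect_rademacherSum_pow_four_le S a
      _ = 𝔼 t ∈ S.powerset,
            ((2 * σ) ^ 2 * |rademacherSum S t a| ^ 2 - |rademacherSum S t a| ^ 4) := by
          simp only [expect_sub_distrib, mul_expect, sq_abs, Even.pow_abs (by decide : Even 4)]
      _ ≤ 𝔼 t ∈ S.powerset, (2 * σ) ^ 3 * |rademacherSum S t a| :=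
          expect_le_expect fun t _ => sq_mul_sq_sub_pow_four_le (by positivity) (abs_nonneg _)
      _ = 8 * σ ^ 3 * 𝔼 t ∈ S.powerset, |rademacherSum S t a| := by
          rw [← mul_expect]
          ring
  have hσ3 : 0 < σ ^ 3 := pow_pos hpos 3
  nlinarith

variable {p : ℝ}

theorem expect_abs_rademacherSum_rpow_le (hp : 0 < p) (hp2 : p ≤ 2) (S : Finset ι) (a : ι → ℝ) :
    𝔼 t ∈ S.powerset, |rademacherSum S t a| ^ p ≤ √(∑ s ∈ S, a s ^ 2) ^ p := by
  calc 𝔼 t ∈ S.powerset, |rademacherSum S t a| ^ p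
      ≤ (𝔼 t ∈ S.powerset, (|rademacherSum S t a| ^ p) ^ (2 / p)) ^ (2 / p)⁻¹ :=
        expect_le_expect_rpow_rpow_inv (powerset_nonempty S) ((one_le_div hp).2 hp2)
          fun _ => by positivity
    _ = (𝔼 t ∈ S.powerset, rademacherSum S t a ^ 2) ^ (2 / p)⁻¹ := by
        congr 1
        refine expect_congr rfl fun t _ => ?_
        rw [← Real.rpow_mul (abs_nonneg _), mul_div_cancel₀ _ hp.ne', Real.rpow_two, sq_abs]
    _ = √(∑ s ∈ S, a s ^ 2) ^ p := by
        rw [expect_rademacherSum_sq, Real.sqrt_eq_rpow,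
          ← Real.rpow_mul (sum_nonneg fun _ _ => sq_nonneg _)]
        congr 1
        field_simp

theorem le_expect_abs_rademacherSum_rpow (hp : 1 ≤ p) (S : Finset ι) (a : ι → ℝ) :
    (√(∑ s ∈ S, a s ^ 2) / 8) ^ p ≤ 𝔼 t ∈ S.powerset, |rademacherSum S t a| ^ p := by
  have hpos : 0 ≤ 𝔼 t ∈ S.powerset, |rademacherSum S t a| ^ p :=
    expect_nonneg fun _ _ => by positivity
  rw [← Real.le_rpow_inv_iff_of_pos (by positivity) hpos (by linarith)]
  exact (sqrt_div_eight_le_expect_abs_rademacherSum S a).trans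
    (expect_le_expect_rpow_rpow_inv (powerset_nonempty S) hp fun _ => abs_nonneg _)

end Khinchine

section HilbertIntoLp

open Finset

variable {ι : Type*} {p : ℝ≥0∞}

theorem exists_linearMap_lp_norm_rpow_eq_expect (hp : 0 < p.toReal) {P : Finset ι}
    (hP : P.Nonempty) : ∃ J : (ι → ℝ) →ₗ[ℝ] lp (fun _ : ℕ => ℝ) p,
      ∀ x, ‖J x‖ ^ p.toReal = 𝔼 t ∈ P, |x t| ^ p.toReal := by
  obtain ⟨e, he⟩ := Set.countable_iff_exists_injOn.1 P.countable_toSet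
  have : Nonempty ι := hP.to_type
  have hcard : 0 < (#P : ℝ) := by exact_mod_cast hP.card_pos
  set w : ℝ := (#P : ℝ) ^ (-p.toReal⁻¹)
  have hw : |w| ^ p.toReal = (#P : ℝ)⁻¹ := by
    rw [abs_of_pos (by positivity), ← Real.rpow_mul hcard.le, neg_mul, inv_mul_cancel₀ hp.ne',
      Real.rpow_neg_one]
  let J : (ι → ℝ) →ₗ[ℝ] lp (fun _ : ℕ => ℝ) p :=
    ∑ t ∈ P, lp.lsingle p (e t) ∘ₗ (w • LinearMap.proj t)
  refine ⟨J, fun x => ?_⟩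
  have hJ : J x =
      ∑ n ∈ P.image e, lp.single (E := fun _ : ℕ => ℝ) p n (w * x (invFunOn e P n)) := by
    rw [sum_image he, LinearMap.sum_apply]
    refine sum_congr rfl fun t ht => ?_
    rw [he.leftInvOn_invFunOn (mem_coe.2 ht)]
    rfl
  rw [hJ, lp.norm_sum_single hp, sum_image he, expect_eq_sum_div_card, sum_div]
  refine sum_congr rfl fun t ht => ?_
  rw [he.leftInvOn_invFunOn (mem_coe.2 ht), Real.norm_eq_abs, abs_mul,
    Real.mul_rpow (abs_nonneg _) (abs_nonneg _), hw, inv_mul_eq_div]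

theorem exists_linearMap_lp_norm_equiv_sqrt_sum_sq (hp : 1 ≤ p.toReal) (hp2 : p.toReal ≤ 2)
    (S : Finset ι) : ∃ T : (ι → ℝ) →ₗ[ℝ] lp (fun _ : ℕ => ℝ) p,
      ∀ a, ‖T a‖ ≤ √(∑ s ∈ S, a s ^ 2) ∧ √(∑ s ∈ S, a s ^ 2) ≤ 8 * ‖T a‖ := by
  have hp0 : 0 < p.toReal := by linarith
  obtain ⟨J, hJ⟩ := exists_linearMap_lp_norm_rpow_eq_expect hp0 (powerset_nonempty S)
  refine ⟨J ∘ₗ LinearMap.pi (rademacherSum S), fun a => ?_⟩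
  set T := J ∘ₗ LinearMap.pi (rademacherSum S)
  have hT : ‖T a‖ ^ p.toReal = 𝔼 t ∈ S.powerset, |rademacherSum S t a| ^ p.toReal := hJ _
  have hupper : ‖T a‖ ^ p.toReal ≤ √(∑ s ∈ S, a s ^ 2) ^ p.toReal :=
    hT ▸ expect_abs_rademacherSum_rpow_le hp0 hp2 S a
  have hlower : (√(∑ s ∈ S, a s ^ 2) / 8) ^ p.toReal ≤ ‖T a‖ ^ p.toReal :=
    hT ▸ le_expect_abs_rademacherSum_rpow hp S a
  have hTa : 0 ≤ ‖T a‖ := lp.norm_nonneg' _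
  rw [Real.rpow_le_rpow_iff hTa (Real.sqrt_nonneg _) hp0] at hupper
  rw [Real.rpow_le_rpow_iff (by positivity) hTa hp0] at hlower
  exact ⟨hupper, by linarith⟩

end HilbertIntoLp

section PathWeight

open Finset

variable {α : Type*}

theorem length_rdrop (x : List α) (i : ℕ) : (x.rdrop i).length = x.length - i := by
  simp [List.rdrop]

theorem rdrop_prefix (x : List α) (i : ℕ) : x.rdrop i <+: x :=
  List.take_prefix _ _

theorem prefix_iff_exists_rdrop {s x : List α} :
    s <+: x ↔ ∃ i < x.length + 1, x.rdrop i = s := by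
  constructor
  · intro h
    refine ⟨x.length - s.length, by lia, ?_⟩
    rw [List.rdrop, Nat.sub_sub_self h.length_le, ← List.prefix_iff_eq_take.1 h]
  · rintro ⟨i, -, rfl⟩
    exact rdrop_prefix x i

theorem injOn_rdrop (x : List α) : Set.InjOn x.rdrop (Finset.range (x.length + 1)) := by
  intro i hi j hj hij
  have hlen := congrArg List.length hij
  simp only [length_rdrop, coe_range, Set.mem_Iio] at hlen hi hj
  lia

theorem sum_le_sum_range_rdrop {F : List α → ℝ} (hF : ∀ s, 0 ≤ F s) {x : List α}
    (hx : ∀ s, ¬ s <+: x → F s = 0) (S : Finset (List α)) :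
    ∑ s ∈ S, F s ≤ ∑ i ∈ Finset.range (x.length + 1), F (x.rdrop i) := by
  rw [← sum_filter_of_ne fun s _ hs => not_imp_comm.1 (hx s) hs, ← sum_image (injOn_rdrop x)]
  refine sum_le_sum_of_subset_of_nonneg (fun s hs => ?_) fun s _ _ => hF s
  simpa using prefix_iff_exists_rdrop.1 (mem_filter.1 hs).2

theorem sum_range_rdrop_le_sum {F : List α → ℝ} (hF : ∀ s, 0 ≤ F s) {x : List α} {n : ℕ}
    (hn : n ≤ x.length + 1) {S : Finset (List α)} (hS : ∀ s, s <+: x → s ∈ S) :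
    ∑ i ∈ Finset.range n, F (x.rdrop i) ≤ ∑ s ∈ S, F s := by
  rw [← sum_image ((injOn_rdrop x).mono (by simpa using hn))]
  refine sum_le_sum_of_subset_of_nonneg (fun s hs => ?_) fun s _ _ => hF s
  obtain ⟨i, -, rfl⟩ := mem_image.1 hs
  exact hS _ (rdrop_prefix x i)

/-- The coordinates of Bourgain's embedding of a tree into Hilbert space: the vertex `x` is sent to
`∑ √(d(x, s) + 1) e s`, the sum running over the prefixes `s` of `x`, that is, the vertices on the
path from the root to `x`. -/
def pathWeight (x s : List α) : ℝ :=
  if s <+: x then √(x.length + 1 - s.length) else 0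

theorem pathWeight_of_not_prefix {x s : List α} (h : ¬ s <+: x) : pathWeight x s = 0 :=
  if_neg h

theorem pathWeight_rdrop {x : List α} {i : ℕ} (hi : i ≤ x.length) :
    pathWeight x (x.rdrop i) = √(i + 1) := by
  rw [pathWeight, if_pos (rdrop_prefix x i), length_rdrop, Nat.cast_sub hi]
  congr 1
  ring

theorem pathWeight_rdrop_concat {x : List α} (a : α) {i : ℕ} (hi : i ≤ x.length + 1) :
    pathWeight x ((x ++ [a]).rdrop i) = √i := by
  cases i with
  | zero =>
    rw [List.rdrop_zero, Nat.cast_zero, Real.sqrt_zero]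
    exact pathWeight_of_not_prefix fun h => by simpa using h.length_le
  | succ i =>
    rw [List.rdrop_concat_succ, pathWeight_rdrop (Nat.le_of_succ_le_succ hi), Nat.cast_succ]

theorem sqrt_add_one_sub_sqrt_sq_le {u : ℝ} (hu : 0 ≤ u) : (√(u + 1) - √u) ^ 2 ≤ (u + 1)⁻¹ := by
  have hs := Real.sq_sqrt hu
  have ht := Real.sq_sqrt (add_nonneg hu zero_le_one)
  have hsub : 0 ≤ √(u + 1) - √u := sub_nonneg.2 (Real.sqrt_le_sqrt (by linarith))
  have hmul : (√(u + 1) - √u) * √(u + 1) ≤ 1 := by nlinarith [Real.sqrt_nonneg u]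
  have hsq : ((√(u + 1) - √u) * √(u + 1)) ^ 2 ≤ 1 := pow_le_one₀ (by positivity) hmul
  rwa [mul_pow, ht, ← le_div_iff₀ (by positivity), one_div] at hsq

theorem sum_sq_pathWeight_concat_sub_le (x : List α) (a : α) (S : Finset (List α)) :
    ∑ s ∈ S, (pathWeight (x ++ [a]) s - pathWeight x s) ^ 2 ≤ 1 + Real.log (x.length + 2) := by
  have hlen : (x ++ [a]).length = x.length + 1 := by simp
  calc ∑ s ∈ S, (pathWeight (x ++ [a]) s - pathWeight x s) ^ 2
      ≤ ∑ i ∈ Finset.range (x.length + 2), (pathWeight (x ++ [a]) ((x ++ [a]).rdrop i)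
          - pathWeight x ((x ++ [a]).rdrop i)) ^ 2 := by
        rw [show x.length + 2 = (x ++ [a]).length + 1 by rw [hlen]]
        refine sum_le_sum_range_rdrop (fun _ => sq_nonneg _) (fun s hs => ?_) S
        rw [pathWeight_of_not_prefix hs, pathWeight_of_not_prefix fun h =>
          hs (h.trans (List.prefix_append x [a])), sub_zero, sq, zero_mul]
    _ ≤ ∑ i ∈ Finset.range (x.length + 2), ((i : ℝ) + 1)⁻¹ := by
        refine sum_le_sum fun i hi => ?_
        have hi' : i ≤ x.length + 1 := Nat.le_of_lt_succ (Finset.mem_range.1 hi)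
        rw [pathWeight_rdrop (hlen ▸ hi'), pathWeight_rdrop_concat a hi']
        exact sqrt_add_one_sub_sqrt_sq_le i.cast_nonneg
    _ = harmonic (x.length + 2) := by simp [harmonic]
    _ ≤ 1 + Real.log (x.length + 2) := by exact_mod_cast harmonic_le_one_add_log (x.length + 2)

theorem sq_div_two_le_sum_range_add_one (n : ℕ) :
    (n : ℝ) ^ 2 / 2 ≤ ∑ i ∈ Finset.range n, ((i : ℝ) + 1) := by
  induction n with
  | zero => simp
  | succ n ih =>
    rw [sum_range_succ]
    push_cast
    linarith

theorem sq_length_sub_lcpLen_le (x y : List ℕ) {S : Finset (List ℕ)}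
    (hS : ∀ s, s <+: x → s ∈ S) :
    ((x.length : ℝ) - lcpLen x y) ^ 2 / 2 ≤ ∑ s ∈ S, (pathWeight x s - pathWeight y s) ^ 2 := by
  rw [← Nat.cast_sub (lcpLen_le_length x y)]
  calc ((x.length - lcpLen x y : ℕ) : ℝ) ^ 2 / 2
      ≤ ∑ i ∈ Finset.range (x.length - lcpLen x y), ((i : ℝ) + 1) :=
        sq_div_two_le_sum_range_add_one _
    _ = ∑ i ∈ Finset.range (x.length - lcpLen x y),
          (pathWeight x (x.rdrop i) - pathWeight y (x.rdrop i)) ^ 2 := by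
        refine sum_congr rfl fun i hi => ?_
        rw [Finset.mem_range] at hi
        have hy : ¬ x.rdrop i <+: y := fun h => by
          have hle := length_le_lcpLen (rdrop_prefix x i) h
          rw [length_rdrop] at hle
          lia
        rw [pathWeight_rdrop (by lia), pathWeight_of_not_prefix hy, sub_zero,
          Real.sq_sqrt (by positivity)]
    _ ≤ ∑ s ∈ S, (pathWeight x s - pathWeight y s) ^ 2 :=
        sum_range_rdrop_le_sum (F := fun s => (pathWeight x s - pathWeight y s) ^ 2)
          (fun _ => sq_nonneg _) (by lia) hS

theorem treeDist_le_three_mul_sqrt_sum_sq {x y : List ℕ} {S : Finset (List ℕ)}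
    (hx : ∀ s, s <+: x → s ∈ S) (hy : ∀ s, s <+: y → s ∈ S) :
    treeDist x y ≤ 3 * √(∑ s ∈ S, (pathWeight x s - pathWeight y s) ^ 2) := by
  have hu := sq_length_sub_lcpLen_le x y hx
  have hv := sq_length_sub_lcpLen_le y x hy
  simp_rw [lcpLen_comm y x, sub_sq_comm (pathWeight y _)] at hv
  refine le_of_sq_le_sq ?_ (by positivity)
  rw [mul_pow, Real.sq_sqrt (sum_nonneg fun _ _ => sq_nonneg _), treeDist]
  nlinarith [sq_nonneg ((x.length : ℝ) - y.length)]

theorem cDist_finite_le {p : ℝ≥0∞} [Fact (1 ≤ p)] (hp : p ≤ 2) {h : ℕ}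
    {F : Set (TreeOmega h)} (hF : F.Finite) :
    cDist F (lp (fun _ : ℕ => ℝ) p) (fun a b : F => tDist h a.1 b.1) (fun a b => ‖a - b‖) ≤
      ENNReal.ofReal (24 * √(1 + Real.log (h + 1))) := by
  rw [mul_comm]
  let S : Finset (List ℕ) := hF.toFinset.biUnion fun x => x.1.inits.toFinset
  have hS : ∀ x : F, ∀ s, s <+: x.1.1 → s ∈ S := fun x s hs =>
    mem_biUnion.2 ⟨x.1, hF.mem_toFinset.2 x.2, by simpa using hs⟩
  have hp_top : p ≠ ⊤ := (hp.trans_lt (by simp)).ne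
  have hp1 : 1 ≤ p.toReal := by
    rw [← ENNReal.toReal_one, ENNReal.toReal_le_toReal ENNReal.one_ne_top hp_top]
    exact Fact.out
  have hp2 : p.toReal ≤ 2 := ENNReal.toReal_mono ENNReal.ofNat_ne_top hp
  obtain ⟨T, hT⟩ := exists_linearMap_lp_norm_equiv_sqrt_sum_sq hp1 hp2 S
  let g : List ℕ → lp (fun _ : ℕ => ℝ) p := fun x => T (pathWeight x)
  have hg : ∀ x y, g x - g y = T (pathWeight x - pathWeight y) := fun x y => (map_sub T _ _).symm
  have hedge : ∀ x a, x.length < h → dist (g (x ++ [a])) (g x) ≤ √(1 + Real.log (h + 1)) := by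
    intro x a hx
    have hxh : (x.length : ℝ) + 2 ≤ h + 1 := by exact_mod_cast (by lia : x.length + 2 ≤ h + 1)
    rw [dist_eq_norm, hg]
    refine (hT _).1.trans (Real.sqrt_le_sqrt ?_)
    refine (sum_sq_pathWeight_concat_sub_le x a S).trans ?_
    gcongr
  have hlower : ∀ x y : F, treeDist x.1.1 y.1.1 ≤ 24 * ‖g x.1.1 - g y.1.1‖ := fun x y => by
    have hw := treeDist_le_three_mul_sqrt_sum_sq (hS x) (hS y)
    have hTw := (hT (pathWeight x.1.1 - pathWeight y.1.1)).2
    simp only [Pi.sub_apply] at hTw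
    rw [hg]
    linarith
  refine cDist_le (f := fun x : F => g x.1.1) (fun x y hxy => ?_) (fun x y => ?_) hlower
  · have hxy0 := hlower x y
    rw [sub_eq_zero.2 hxy, norm_zero, mul_zero] at hxy0
    exact Subtype.ext (Subtype.ext (eq_of_treeDist_le_zero hxy0))
  · exact (dist_eq_norm _ _).symm.trans_le (dist_le_mul_treeDist_of_edges hedge x.1.2 y.1.2)

end PathWeight

section ForkGap

/-- A quantitative form of property (β) of Rolewicz, `‖·‖ ^ p` playing the role of an energy: if `u`
and the `v j` have energy at most `A` and the `v j` are `2`-separated, then some midpoint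
`(u + v j) / 2` has energy at most `A - c`. Applied to the two consecutive edges of the forks
`x, x ++ [a], x ++ [a, j]`, it says that the energy drops by `c` when a tree is halved. -/
def HasForkGap (E : Type*) [SeminormedAddCommGroup E] (p c : ℝ) : Prop :=
  ∀ ⦃A : ℝ⦄ ⦃u : E⦄ ⦃v : ℕ → E⦄, ‖u‖ ^ p ≤ A → (∀ j, ‖v j‖ ^ p ≤ A) →
    (Pairwise fun j k => 2 ≤ ‖v j - v k‖) → ∃ j, ‖u + v j‖ ^ p ≤ 2 ^ p * (A - c)

theorem norm_add_rpow_le {E : Type*} [SeminormedAddGroup E] {p : ℝ} (hp : 1 ≤ p) (x y : E) :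
    ‖x + y‖ ^ p ≤ 2 ^ (p - 1) * (‖x‖ ^ p + ‖y‖ ^ p) := by
  have hconv := NNReal.rpow_add_le_mul_rpow_add_rpow ‖x‖₊ ‖y‖₊ hp
  calc ‖x + y‖ ^ p ≤ (‖x‖ + ‖y‖) ^ p := by gcongr; exact norm_add_le x y
    _ ≤ 2 ^ (p - 1) * (‖x‖ ^ p + ‖y‖ ^ p) := by exact_mod_cast hconv

variable {ι : Type*} {E : ι → Type*} [∀ i, NormedAddCommGroup (E i)] {p : ℝ≥0∞}

/-- The part of an element of `lp E p` outside a finite set `s` of coordinates. -/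
def lpTail (s : Finset ι) (f : lp E p) : lp E p :=
  f - ∑ i ∈ s, lp.single p i (f i)

theorem lpTail_add (s : Finset ι) (f g : lp E p) :
    lpTail s (f + g) = lpTail s f + lpTail s g := by
  simp only [lpTail, lp.coeFn_add, Pi.add_apply, lp.single_add, Finset.sum_add_distrib]
  abel

theorem norm_lpTail_rpow (hp : 0 < p.toReal) (s : Finset ι) (f : lp E p) :
    ‖lpTail s f‖ ^ p.toReal = ‖f‖ ^ p.toReal - ∑ i ∈ s, ‖f i‖ ^ p.toReal :=
  lp.norm_compl_sum_single hp f s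

theorem norm_add_rpow_le_of_lpTail (hp : 1 ≤ p.toReal) (s : Finset ι) (u v : lp E p) :
    ‖u + v‖ ^ p.toReal ≤ 2 ^ (p.toReal - 1) *
      (‖u‖ ^ p.toReal + ‖v‖ ^ p.toReal - ‖lpTail s v‖ ^ p.toReal)
        + ‖lpTail s (u + v)‖ ^ p.toReal := by
  have hp0 : 0 < p.toReal := zero_lt_one.trans_le hp
  have hhead : ∑ i ∈ s, ‖(u + v) i‖ ^ p.toReal ≤ 2 ^ (p.toReal - 1) *
      (∑ i ∈ s, ‖u i‖ ^ p.toReal + ∑ i ∈ s, ‖v i‖ ^ p.toReal) := by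
    rw [← Finset.sum_add_distrib, Finset.mul_sum]
    exact Finset.sum_le_sum fun i _ => norm_add_rpow_le hp (u i) (v i)
  have hu := lp.sum_rpow_le_norm_rpow hp0 u s
  have hv := norm_lpTail_rpow hp0 s v
  have huv := norm_lpTail_rpow hp0 s (u + v)
  calc ‖u + v‖ ^ p.toReal
      = ∑ i ∈ s, ‖(u + v) i‖ ^ p.toReal + ‖lpTail s (u + v)‖ ^ p.toReal := by rw [huv]; ring
    _ ≤ 2 ^ (p.toReal - 1) * (∑ i ∈ s, ‖u i‖ ^ p.toReal + ∑ i ∈ s, ‖v i‖ ^ p.toReal)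
          + ‖lpTail s (u + v)‖ ^ p.toReal := by gcongr
    _ ≤ _ := by gcongr; linarith

variable [Fact (1 ≤ p)]

theorem exists_norm_lpTail_lt (hp : p ≠ ⊤) (f : lp E p) {ε : ℝ} (hε : 0 < ε) :
    ∃ s : Finset ι, ‖lpTail s f‖ < ε := by
  obtain ⟨s, hs⟩ := ((lp.hasSum_single hp f).eventually (Metric.ball_mem_nhds f hε)).exists
  exact ⟨s, by rwa [dist_comm, dist_eq_norm] at hs⟩

variable [∀ i, ProperSpace (E i)]

theorem exists_tendsto_subseq_sum_single (s : Finset ι) {v : ℕ → lp E p} {R : ℝ}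
    (hv : ∀ j, ‖v j‖ ≤ R) : ∃ φ : ℕ → ℕ, StrictMono φ ∧
      ∃ w, Tendsto (fun n => ∑ i ∈ s, lp.single p i (v (φ n) i)) atTop (nhds w) := by
  let head : (∀ i : s, E i) → lp E p := fun w => ∑ i : s, lp.single p i.1 (w i)
  have hcont : Continuous head := continuous_finsetSum _ fun i _ =>
    (lp.isometry_single i.1).continuous.comp (continuous_apply i)
  have hp0 : p ≠ 0 := (zero_lt_one.trans_le (Fact.out : 1 ≤ p)).ne'
  have hbound : ∀ j, (fun i : s => v j i) ∈ Metric.closedBall (0 : ∀ i : s, E i) R := fun j => by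
    rw [mem_closedBall_zero_iff, pi_norm_le_iff_of_nonneg ((norm_nonneg _).trans (hv j))]
    exact fun i => (lp.norm_apply_le_norm hp0 _ _).trans (hv j)
  obtain ⟨w, -, φ, hφ, hw⟩ := tendsto_subseq_of_bounded Metric.isBounded_closedBall hbound
  refine ⟨φ, hφ, head w, ((hcont.tendsto w).comp hw).congr fun n => ?_⟩
  exact Finset.sum_coe_sort s fun i => lp.single p i (v (φ n) i)

theorem exists_le_norm_lpTail_of_separated (s : Finset ι) {v : ℕ → lp E p} {R δ η : ℝ}
    (hv : ∀ j, ‖v j‖ ≤ R) (hsep : Pairwise fun j k => δ ≤ ‖v j - v k‖) (hη : 2 * η < δ) :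
    ∃ j, η ≤ ‖lpTail s (v j)‖ := by
  by_contra! htail
  obtain ⟨φ, hφ, w, hw⟩ := exists_tendsto_subseq_sum_single s hv
  obtain ⟨N, hN⟩ := Metric.cauchySeq_iff.1 hw.cauchySeq (δ - 2 * η) (by linarith)
  have hhead := hN N le_rfl (N + 1) N.le_succ
  rw [dist_eq_norm] at hhead
  have hdist := hsep (hφ N.lt_succ_self).ne
  have htriangle : ‖v (φ N) - v (φ (N + 1))‖ ≤ ‖lpTail s (v (φ N))‖ + ‖lpTail s (v (φ (N + 1)))‖ +
      ‖∑ i ∈ s, lp.single p i (v (φ N) i) - ∑ i ∈ s, lp.single p i (v (φ (N + 1)) i)‖ := by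
    refine le_trans (le_of_eq ?_) (norm_add_le_of_le (norm_sub_le _ _) le_rfl)
    rw [lpTail, lpTail]
    congr 1
    abel
  linarith [htail (φ N), htail (φ (N + 1))]

theorem exists_hasForkGap_lp (hp : 1 < p.toReal) :
    ∃ c, 0 < c ∧ HasForkGap (lp E p) p.toReal c := by
  set q := p.toReal
  have hq : 0 < q := by linarith
  have hp_top : p ≠ ⊤ := fun h => by simp [q, h] at hq
  obtain ⟨r, hr1, hr⟩ : ∃ r : ℝ, 1 < r ∧ r ^ q < 2 ^ (q - 1) := by
    refine ⟨2 ^ ((q - 1) / (2 * q)), Real.one_lt_rpow one_lt_two (by bound), ?_⟩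
    rw [← Real.rpow_mul zero_le_two]
    refine Real.rpow_lt_rpow_of_exponent_lt one_lt_two ?_
    field_simp
    linarith
  refine ⟨(2 ^ (q - 1) - r ^ q) * (1 / 2) ^ q / 2 ^ q, by bound, fun A u v hu hv hsep => ?_⟩
  obtain ⟨s, hs⟩ := exists_norm_lpTail_lt hp_top u (half_pos (sub_pos.2 hr1))
  have hA : 0 ≤ A := le_trans (by positivity) hu
  have hvR : ∀ j, ‖v j‖ ≤ A ^ q⁻¹ := fun j =>
    (Real.le_rpow_inv_iff_of_pos (norm_nonneg _) hA hq).2 (hv j)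
  obtain ⟨j, hj⟩ := exists_le_norm_lpTail_of_separated s hvR hsep (η := 1 / 2) (by norm_num)
  set τ := ‖lpTail s (v j)‖
  have htail : ‖lpTail s (u + v j)‖ ^ q ≤ r ^ q * τ ^ q := by
    rw [← Real.mul_rpow (by linarith) (norm_nonneg _), lpTail_add]
    gcongr
    calc ‖lpTail s u + lpTail s (v j)‖ ≤ (r - 1) / 2 + τ := norm_add_le_of_le hs.le le_rfl
      _ ≤ r * τ := by nlinarith
  have hpow : (2 : ℝ) ^ q = 2 ^ (q - 1) * 2 := by
    rw [← Real.rpow_add_one two_ne_zero, sub_add_cancel]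
  refine ⟨j, ?_⟩
  calc ‖u + v j‖ ^ q
      ≤ 2 ^ (q - 1) * (‖u‖ ^ q + ‖v j‖ ^ q - τ ^ q) + ‖lpTail s (u + v j)‖ ^ q :=
        norm_add_rpow_le_of_lpTail hp.le s u (v j)
    _ ≤ 2 ^ (q - 1) * (A + A - τ ^ q) + r ^ q * τ ^ q := by gcongr; exact hv j
    _ = 2 ^ q * A - (2 ^ (q - 1) - r ^ q) * τ ^ q := by rw [hpow]; ring
    _ ≤ 2 ^ q * A - (2 ^ (q - 1) - r ^ q) * (1 / 2) ^ q := by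
        have := sub_nonneg.2 hr.le
        gcongr
    _ = _ := by field_simp

end ForkGap

section Doubling

/-- A choice `j` of a second letter, given the current vertex and a first letter, turns a vertex `x`
of the tree into a vertex of even level: each letter of `x` is followed by the letter chosen by
`j`. -/
def doublePath (j : List ℕ → ℕ → ℕ) : List ℕ → List ℕ
  | [] => []
  | a :: x => a :: j [] a :: doublePath (fun y => j (a :: j [] a :: y)) x

theorem length_doublePath (j : List ℕ → ℕ → ℕ) (x : List ℕ) :
    (doublePath j x).length = 2 * x.length := by
  induction x generalizing j with
  | nil => rfl
  | cons a x ih => simp only [doublePath, List.length_cons, ih]; ring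

theorem lcpLen_doublePath (j : List ℕ → ℕ → ℕ) (x y : List ℕ) :
    lcpLen (doublePath j x) (doublePath j y) = 2 * lcpLen x y := by
  induction x generalizing j y with
  | nil => simp [doublePath, lcpLen]
  | cons a x ih =>
    rcases y with _ | ⟨b, y⟩
    · simp [doublePath, lcpLen]
    by_cases hab : a = b
    · subst hab
      simp only [doublePath, lcpLen, if_true, ih]
      ring
    · simp [doublePath, lcpLen, hab]

theorem treeDist_doublePath (j : List ℕ → ℕ → ℕ) (x y : List ℕ) :
    treeDist (doublePath j x) (doublePath j y) = 2 * treeDist x y := by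
  simp only [treeDist, length_doublePath, lcpLen_doublePath, Nat.cast_mul, Nat.cast_ofNat]
  ring

theorem doublePath_concat (j : List ℕ → ℕ → ℕ) (x : List ℕ) (a : ℕ) :
    doublePath j (x ++ [a]) = doublePath j x ++ [a] ++ [j (doublePath j x) a] := by
  induction x generalizing j with
  | nil => rfl
  | cons b x ih => simp [doublePath, ih]

end Doubling

section LowerBound

variable {E : Type*} [NormedAddCommGroup E] {p c A : ℝ} {h : ℕ} {f : List ℕ → E}

/-- A noncontracting map of the tree of height `h` whose edges have energy `‖·‖ ^ p` at most `A`.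
The map is defined on all lists, its values at those longer than `h` being irrelevant. -/
structure NoncontractingTreeMap (p A : ℝ) (h : ℕ) (f : List ℕ → E) : Prop where
  edge_le : ∀ x a, x.length < h → ‖f (x ++ [a]) - f x‖ ^ p ≤ A
  treeDist_le : ∀ x y, x.length ≤ h → y.length ≤ h → treeDist x y ≤ ‖f x - f y‖

theorem NoncontractingTreeMap.exists_grandchild_le (hf : NoncontractingTreeMap p A h f)
    (hgap : HasForkGap E p c) {x : List ℕ} (hx : x.length + 2 ≤ h) (a : ℕ) :
    ∃ j, ‖f (x ++ [a] ++ [j]) - f x‖ ^ p ≤ 2 ^ p * (A - c) := by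
  obtain ⟨j, hj⟩ := hgap (u := f (x ++ [a]) - f x)
    (v := fun j => f (x ++ [a] ++ [j]) - f (x ++ [a])) (hf.edge_le x a (by lia))
    (fun j => hf.edge_le (x ++ [a]) j (by simpa using Nat.lt_of_succ_le hx)) fun j k hjk => by
      simp only [sub_sub_sub_cancel_right]
      rw [← treeDist_siblings (x ++ [a]) hjk]
      exact hf.treeDist_le _ _ (by simpa using hx) (by simpa using hx)
  exact ⟨j, by rwa [add_comm, sub_add_sub_cancel] at hj⟩

variable [NormedSpace ℝ E]

theorem NoncontractingTreeMap.exists_half (hf : NoncontractingTreeMap p A (2 * h) f)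
    (hgap : HasForkGap E p c) : ∃ g : List ℕ → E, NoncontractingTreeMap p (A - c) h g := by
  have hgrandchild : ∀ x a, ∃ j, x.length + 2 ≤ 2 * h →
      ‖f (x ++ [a] ++ [j]) - f x‖ ^ p ≤ 2 ^ p * (A - c) := fun x a => by
    by_cases hx : x.length + 2 ≤ 2 * h
    · obtain ⟨j, hj⟩ := hf.exists_grandchild_le hgap hx a
      exact ⟨j, fun _ => hj⟩
    · exact ⟨0, fun hx' => absurd hx' hx⟩
  choose j hj using hgrandchild
  let g : List ℕ → E := fun x => (2 : ℝ)⁻¹ • f (doublePath j x)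
  have hg : ∀ x y, ‖g x - g y‖ = 2⁻¹ * ‖f (doublePath j x) - f (doublePath j y)‖ := fun x y => by
    rw [← smul_sub, norm_smul, Real.norm_of_nonneg (by norm_num)]
  refine ⟨g, fun x a hx => ?_, fun x y hx hy => ?_⟩
  · have hstep := hj (doublePath j x) a (by rw [length_doublePath]; lia)
    rw [hg, doublePath_concat, Real.mul_rpow (by norm_num) (norm_nonneg _),
      Real.inv_rpow zero_le_two]
    exact (inv_mul_le_iff₀ (by positivity)).2 hstep
  · have hdist := hf.treeDist_le (doublePath j x) (doublePath j y)
      (by rw [length_doublePath]; lia) (by rw [length_doublePath]; lia)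
    rw [treeDist_doublePath] at hdist
    rw [hg]
    linarith

theorem NoncontractingTreeMap.mul_le {n : ℕ} (hf : NoncontractingTreeMap p A (2 ^ n) f)
    (hgap : HasForkGap E p c) : c * n ≤ A := by
  induction n generalizing A f with
  | zero =>
    rw [Nat.cast_zero, mul_zero]
    exact (by positivity : 0 ≤ ‖f ([] ++ [0]) - f []‖ ^ p).trans (hf.edge_le [] 0 (by simp))
  | succ n ih =>
    rw [pow_succ'] at hf
    obtain ⟨g, hg⟩ := hf.exists_half hgap
    push_cast
    linarith [ih hg]

theorem rpow_inv_le_cDist_of_hasForkGap (hp : 0 < p) (hc : 0 ≤ c) (hgap : HasForkGap E p c)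
    (n : ℕ) : ENNReal.ofReal ((c * n) ^ p⁻¹) ≤
      cDist (TreeOmega (2 ^ n)) E (tDist (2 ^ n)) (fun a b => ‖a - b‖) := by
  refine le_iInf₂ ?_
  rintro _ ⟨f, -, L, C, hL, hC, rfl⟩
  refine ENNReal.ofReal_le_ofReal ?_
  let root : TreeOmega (2 ^ n) := ⟨[], Nat.zero_le _⟩
  let child : TreeOmega (2 ^ n) := ⟨[0], Nat.one_le_two_pow⟩
  have hedge : 0 < tDist (2 ^ n) child root :=
    zero_lt_one.trans_eq (treeDist_append_singleton_self [] 0).symm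
  have hCpos : 0 < C := hC.pos hedge (norm_nonneg _)
  have hLC : 0 ≤ L * C := mul_nonneg (hL.nonneg hedge (norm_nonneg _)) hCpos.le
  let g : List ℕ → E := fun x => C • f ⟨x.take (2 ^ n), List.length_take_le _ _⟩
  have hg : ∀ {x y} (hx : x.length ≤ 2 ^ n) (hy : y.length ≤ 2 ^ n),
      ‖g x - g y‖ = C * ‖f ⟨x, hx⟩ - f ⟨y, hy⟩‖ := fun hx hy => by
    simp only [g, List.take_of_length_le hx, List.take_of_length_le hy]
    rw [← smul_sub, norm_smul, Real.norm_of_nonneg hCpos.le]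
  have hmap : NoncontractingTreeMap p ((L * C) ^ p) (2 ^ n) g := by
    refine ⟨fun x a hx => ?_, fun x y hx hy => (hC ⟨x, hx⟩ ⟨y, hy⟩).trans_eq (hg hx hy).symm⟩
    have hxa : (x ++ [a]).length ≤ 2 ^ n := by simpa using hx
    refine Real.rpow_le_rpow (norm_nonneg _) ?_ hp.le
    rw [hg hxa hx.le, mul_comm L]
    refine mul_le_mul_of_nonneg_left ((hL ⟨x ++ [a], hxa⟩ ⟨x, hx.le⟩).trans_eq ?_) hCpos.le
    exact (congrArg (L * ·) (treeDist_append_singleton_self x a)).trans (mul_one L)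
  rw [Real.rpow_inv_le_iff_of_pos (by positivity) hLC hp]
  exact hmap.mul_le hgap

end LowerBound

section Growth

theorem one_add_log_two_pow_add_one_le {n : ℕ} (hn : 1 ≤ n) :
    1 + Real.log (2 ^ n + 1) ≤ 3 * n := by
  have hn' : (1 : ℝ) ≤ n := by exact_mod_cast hn
  have hpow : (2 : ℝ) ^ n + 1 ≤ 2 ^ (n + 1) := by
    rw [pow_succ]
    linarith [one_le_pow₀ (one_le_two (α := ℝ)) (n := n)]
  calc 1 + Real.log (2 ^ n + 1) ≤ 1 + Real.log (2 ^ (n + 1)) := by gcongr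
    _ = 1 + (n + 1) * Real.log 2 := by rw [Real.log_pow]; push_cast; ring
    _ ≤ 3 * n := by nlinarith [Real.log_two_lt_d9, Real.log_two_gt_d9]

theorem exists_mul_sqrt_log_lt_rpow_inv {p c : ℝ} (hp : 0 < p) (hp2 : p < 2) (hc : 0 < c)
    {K : ℝ} (hK : 0 ≤ K) :
    ∃ n : ℕ, K * √(1 + Real.log (2 ^ n + 1)) < (c * n) ^ p⁻¹ := by
  have hexp : 0 < p⁻¹ - 1 / 2 := by
    rw [sub_pos, ← one_div]
    exact one_div_lt_one_div_of_lt hp hp2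
  have hgrowth := ((tendsto_rpow_atTop hexp).comp tendsto_natCast_atTop_atTop).const_mul_atTop
    (Real.rpow_pos_of_pos hc p⁻¹)
  obtain ⟨n, hn, hn1⟩ :=
    ((hgrowth.eventually_gt_atTop (K * √3)).and (eventually_ge_atTop 1)).exists
  have hn0 : (0 : ℝ) < n := by exact_mod_cast hn1
  have hn' : K * √3 < c ^ p⁻¹ * (n : ℝ) ^ (p⁻¹ - 1 / 2) := hn
  refine ⟨n, ?_⟩
  calc K * √(1 + Real.log (2 ^ n + 1)) ≤ K * √(3 * n) := by
        gcongr
        exact one_add_log_two_pow_add_one_le hn1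
    _ = K * √3 * √n := by rw [Real.sqrt_mul (by norm_num), mul_assoc]
    _ < c ^ p⁻¹ * (n : ℝ) ^ (p⁻¹ - 1 / 2) * √n := by gcongr
    _ = (c * n) ^ p⁻¹ := by
        rw [Real.sqrt_eq_rpow, mul_assoc, ← Real.rpow_add hn0, sub_add_cancel,
          Real.mul_rpow hc.le hn0.le]

end Growth

/-- Proposition 4.21: for `1 < p < 2` there is no constant `μ` such
that `c_{ℓ_p}(T^ω_h) ≤ μ λ` whenever `T^ω_h` is `λ`-finitely representable in
`ℓ_p`. -/
theorem no_finite_determinacy_for_trees (p : ℝ) (hp1 : 1 < p) (hp2 : p < 2) :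
    ¬ ∃ μ : ℝ, 0 < μ ∧ ∀ h : ℕ, 1 ≤ h → ∀ lam : ℝ, 1 ≤ lam →
      (∀ F : Set (TreeOmega h), F.Finite →
        cDist F (lp (fun _ : ℕ => ℝ) (ENNReal.ofReal p))
          (fun a b : F => tDist h a.1 b.1) (fun a b => ‖a - b‖) ≤ ENNReal.ofReal lam) →
      cDist (TreeOmega h) (lp (fun _ : ℕ => ℝ) (ENNReal.ofReal p)) (tDist h)
        (fun a b => ‖a - b‖) ≤ ENNReal.ofReal (μ * lam) := by
  rintro ⟨μ, hμ, H⟩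
  have : Fact (1 ≤ ENNReal.ofReal p) := ⟨ENNReal.one_le_ofReal.2 hp1.le⟩
  have hp0 : 0 < p := one_pos.trans hp1
  have hp : (ENNReal.ofReal p).toReal = p := ENNReal.toReal_ofReal hp0.le
  obtain ⟨c, hc, hgap⟩ := exists_hasForkGap_lp (E := fun _ : ℕ => ℝ) (hp.symm ▸ hp1)
  rw [hp] at hgap
  obtain ⟨n, hn⟩ := exists_mul_sqrt_log_lt_rpow_inv hp0 hp2 hc (by positivity : 0 ≤ μ * 24)
  set lam := 24 * √(1 + Real.log ((2 ^ n : ℕ) + 1))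
  have hlam : 1 ≤ lam := by
    have hlog : 0 ≤ Real.log ((2 ^ n : ℕ) + 1) := Real.log_nonneg (by simp)
    linarith [Real.one_le_sqrt.2 (le_add_of_nonneg_right hlog)]
  have hupper := H (2 ^ n) Nat.one_le_two_pow lam hlam fun F hF =>
    cDist_finite_le (ENNReal.ofReal_le_ofNat.2 hp2.le) hF
  have hlower := rpow_inv_le_cDist_of_hasForkGap hp0 hc.le hgap n
  have hle := (ENNReal.ofReal_le_ofReal_iff (by positivity)).1 (hlower.trans hupper)
  refine hle.not_gt ?_
  rwa [← mul_assoc, Nat.cast_pow, Nat.cast_ofNat]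

end
end
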